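/- For every integer N ≥ 2, every real p > 1, all positive reals f, F with f^p ≤ F, and every κ ∈ (0,1], the quantity D_p(F,f,κ) := inf { sup_{E measurable, μ(E)=κ} ∫_E (M_N φ)^p dμ : φ ≥ 0 measurable on [0,1), ∫ φ dμ = f, ∫ φ^p dμ = F } equals min { κ·u^p + ((N^p − 1)/(N^p − N))·(F − u^{p−1} f) : f ≤ u ≤ min((F/f)^{1/(p−1)}, f/κ) }. -/

import Mathlib

open MeasureTheory Set Filter

/-- The `N`-adic interval `[k/N^m, (k+1)/N^m)` at level `m`. -/
def adicItv (N m k : ℕ) : Set ℝ :=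
  Set.Ico ((k : ℝ) / (N : ℝ) ^ m) (((k : ℝ) + 1) / (N : ℝ) ^ m)

/-- The average `(1/μ(I)) ∫_I |φ| dμ` of `φ` over the `N`-adic interval at level `m`, index `k`
(its measure is `N^{-m}`). -/
noncomputable def adicAvg (N : ℕ) (φ : ℝ → ℝ) (m k : ℕ) : ℝ :=
  (N : ℝ) ^ m * ∫ y in adicItv N m k, |φ y|

/-- The `N`-adic maximal operator on `[0,1)`:
`M_N φ(x) = sup { (1/μ(I)) ∫_I |φ| dμ : x ∈ I, I an N-adic interval }`. -/
noncomputable def adicMax (N : ℕ) (φ : ℝ → ℝ) (x : ℝ) : ℝ :=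
  sSup {r : ℝ | ∃ m k : ℕ, k < N ^ m ∧ x ∈ adicItv N m k ∧ r = adicAvg N φ m k}

/-- `sup { ∫_E (M_N φ)^p dμ : E ⊆ [0,1) measurable, μ(E) = κ }`. -/
noncomputable def supMeas (N : ℕ) (p κ : ℝ) (φ : ℝ → ℝ) : ℝ :=
  sSup {z : ℝ | ∃ E : Set ℝ, MeasurableSet E ∧ E ⊆ Set.Ico (0:ℝ) 1 ∧
    volume E = ENNReal.ofReal κ ∧ z = ∫ x in E, adicMax N φ x ^ p}

/-- The Bellman function `D_p(F,f,κ)`: the infimum of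
`sup { ∫_E (M_N φ)^p dμ : μ(E) = κ }` over all nonnegative measurable `φ` on `[0,1)`
with `∫ φ dμ = f` and `∫ φ^p dμ = F`. -/
noncomputable def Dp (N : ℕ) (p F f κ : ℝ) : ℝ :=
  sInf {y : ℝ | ∃ φ : ℝ → ℝ, Measurable φ ∧ (∀ x ∈ Set.Ico (0:ℝ) 1, 0 ≤ φ x) ∧
    (∫ x in Set.Ico (0:ℝ) 1, φ x) = f ∧ (∫ x in Set.Ico (0:ℝ) 1, φ x ^ p) = F ∧
    y = supMeas N p κ φ}

/-!
Let `c = (N ^ p - 1) / (N ^ p - N)`.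

*Lower bound.* The averages of `φ` along the `N`-adic filtration form a martingale `X` whose terms
grow by a factor at most `N` in one step. Convexity of `x ^ p` on `[1, N]` shows that
`m ^ p - c * m ^ (p - 1) * X`, with `m` the running maximum of `X` truncated below at `u`, does not
decrease in mean when a new maximum is reached; in the limit
`∫ max(u, M φ) ^ p ≥ u ^ p + c (F - u ^ (p - 1) f)` for `u ≥ f`. Taking for `E` a set of measure `κ`
that contains `{M φ > u}` and is contained in `{M φ ≥ u}` turns this into the bound on `∫_E`, and
the weak type inequality gives `κ u ≤ f`.

*Upper bound.* Equality holds in the truncated inequality when `φ` is constant equal to `0` or `u`,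
it is inherited by rescaled copies of extremal functions placed side by side on disjoint `N`-adic
intervals, and by a copy of `N φ` placed on one interval of measure `1 / N` when `∫ φ = u`, because
then the average jumps from `u` to exactly `N u`. These operations reach every `F` with
`u ^ (p - 1) f ≤ F`.
-/

open scoped Topology

/-- The constant `(N ^ p - 1) / (N ^ p - N)` of the sharp inequality for a ratio bound `N`. -/
noncomputable def sharpConst (N p : ℝ) : ℝ :=
  (N ^ p - 1) / (N ^ p - N)

section Scalar

variable {N p m x y : ℝ}

lemma rpow_sub_one_mul_self (hx : 0 ≤ x) (hp : 1 < p) : x ^ (p - 1) * x = x ^ p := by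
  rw [← Real.rpow_add_one' hx (by linarith), sub_add_cancel]

lemma lt_rpow_self_of_one_lt (hN : 1 < N) (hp : 1 < p) : N < N ^ p := by
  simpa using Real.rpow_lt_rpow_of_exponent_lt hN hp

lemma one_lt_sharpConst (hN : 1 < N) (hp : 1 < p) : 1 < sharpConst N p := by
  rw [sharpConst, one_lt_div (sub_pos.2 (lt_rpow_self_of_one_lt hN hp))]
  linarith

lemma sharpConst_mul_rpow_sub (hN : 1 < N) (hp : 1 < p) :
    sharpConst N p * (N ^ p - N) = N ^ p - 1 :=
  div_mul_cancel₀ _ (sub_pos.2 (lt_rpow_self_of_one_lt hN hp)).ne'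

lemma rpow_le_chord (hN : 1 < N) (hp : 1 ≤ p) (hx : x ∈ Icc 1 N) :
    (N - 1) * x ^ p ≤ (N - x) + (x - 1) * N ^ p := by
  have hN' : 0 < N - 1 := sub_pos.2 hN
  have chord := (convexOn_rpow hp).2 (mem_Ici.2 zero_le_one)
    (mem_Ici.2 (zero_le_one.trans hN.le)) (div_nonneg (sub_nonneg.2 hx.2) hN'.le)
    (div_nonneg (sub_nonneg.2 hx.1) hN'.le) (by field_simp; ring)
  have hmean : (N - x) / (N - 1) * 1 + (x - 1) / (N - 1) * N = x := by field_simp; ring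
  simp only [smul_eq_mul, hmean, Real.one_rpow] at chord
  calc (N - 1) * x ^ p
      ≤ (N - 1) * ((N - x) / (N - 1) * 1 + (x - 1) / (N - 1) * N ^ p) := by gcongr
    _ = (N - x) + (x - 1) * N ^ p := by field_simp

lemma sharpConst_mul_le (hN : 1 < N) (hp : 1 < p) (hx : x ∈ Icc 1 N) :
    1 - sharpConst N p * x ≤ (1 - sharpConst N p) * x ^ p := by
  have hpos : 0 < N ^ p - N := sub_pos.2 (lt_rpow_self_of_one_lt hN hp)
  have hc := sharpConst_mul_rpow_sub hN hp
  have hchord := rpow_le_chord hN hp.le hx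
  refine le_of_mul_le_mul_right ?_ hpos
  linear_combination hchord + (x ^ p - x) * hc

/-- `a m^p - b m^(p-1) y`, where `m` is the running maximum of a martingale and `y` its current
value. The proof rests on this quantity not decreasing in mean for two choices of `(a, b)`. -/
noncomputable def maxPotential (a b p m y : ℝ) : ℝ :=
  a * m ^ p - b * (m ^ (p - 1) * y)

lemma maxPotential_mul_self {a b : ℝ} (hm : 0 < m) (hx : 0 ≤ x) (hp : 1 < p) :
    maxPotential a b p (x * m) (x * m) = (a - b) * x ^ p * m ^ p := by
  have hxm : 0 ≤ x * m := mul_nonneg hx hm.le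
  rw [maxPotential, rpow_sub_one_mul_self hxm hp, Real.mul_rpow hx hm.le]
  ring

-- By homogeneity only the normalisation `m = 1` of the inequality at a new maximum matters.
lemma maxPotential_le_max_of_normalized {a b : ℝ} (hp : 1 < p)
    (h : ∀ x ∈ Icc 1 N, a - b * x ≤ (a - b) * x ^ p) (hm : 0 < m) (hy : y ≤ N * m) :
    maxPotential a b p m y ≤ maxPotential a b p (max m y) y := by
  rcases le_total y m with hym | hmy
  · rw [max_eq_left hym]
  · obtain ⟨x, rfl⟩ : ∃ x, y = x * m := ⟨y / m, by field_simp⟩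
    have hx : x ∈ Icc 1 N := ⟨by simpa [hm] using hmy, le_of_mul_le_mul_right hy hm⟩
    rw [max_eq_right hmy, maxPotential_mul_self hm (zero_le_one.trans hx.1) hp]
    calc maxPotential a b p m (x * m) = (a - b * x) * m ^ p := by
          rw [maxPotential, ← rpow_sub_one_mul_self hm.le hp]; ring
      _ ≤ (a - b) * x ^ p * m ^ p := by gcongr; exact h x hx

lemma maxPotential_sharpConst_le_max (hN : 1 < N) (hp : 1 < p) (hm : 0 < m) (hy : y ≤ N * m) :
    maxPotential 1 (sharpConst N p) p m y ≤ maxPotential 1 (sharpConst N p) p (max m y) y :=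
  maxPotential_le_max_of_normalized hp
    (fun _ hx ↦ by simpa using sharpConst_mul_le hN hp hx) hm hy

lemma maxPotential_doob_le_max (hp : 1 < p) (hm : 0 < m) (hy : y ≤ N * m) :
    maxPotential (1 - p) (-p) p m y ≤ maxPotential (1 - p) (-p) p (max m y) y := by
  refine maxPotential_le_max_of_normalized hp (fun x hx ↦ ?_) hm hy
  have bernoulli := one_add_mul_self_le_rpow_one_add (s := x - 1) (by linarith [hx.1]) hp.le
  rw [add_sub_cancel] at bernoulli
  linarith

lemma rpow_sub_one_mul_le_add {δ : ℝ} (hδ : 0 < δ) (hp : 1 < p) (hx : 0 ≤ x) (hy : 0 ≤ y) :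
    x ^ (p - 1) * y ≤ δ * x ^ p + δ ^ (1 - p) * y ^ p := by
  rcases le_total y (δ * x) with h | h
  · have hle : x ^ (p - 1) * y ≤ δ * x ^ p := by
      rw [← rpow_sub_one_mul_self hx hp, mul_left_comm]
      gcongr
    have : 0 ≤ δ ^ (1 - p) * y ^ p := by positivity
    linarith
  · have hle : x ^ (p - 1) * y ≤ δ ^ (1 - p) * y ^ p := by
      have hδx : x ≤ y / δ := (le_div_iff₀' hδ).2 h
      calc x ^ (p - 1) * y ≤ (y / δ) ^ (p - 1) * y := by gcongr
        _ = δ ^ (1 - p) * y ^ p := by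
          rw [Real.div_rpow hy hδ.le, ← rpow_sub_one_mul_self hy hp, ← neg_sub p 1,
            Real.rpow_neg hδ.le]
          ring
    have : 0 ≤ δ * x ^ p := by positivity
    linarith

end Scalar

/-- `X` is the martingale closed by `φ`, i.e. `X n = 𝔼[φ | ℱ n]`; it is nonnegative, grows by a
factor at most `N` in one step (for the `N`-adic filtration every atom has `N` children), and
converges to `φ` almost everywhere. -/
structure IsRegularMartingale {Ω : Type*} {m₀ : MeasurableSpace Ω} (N : ℝ) (ℱ : Filtration ℕ m₀)
    (φ : Ω → ℝ) (X : ℕ → Ω → ℝ) (μ : Measure Ω) : Prop where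
  stronglyMeasurable (n : ℕ) : StronglyMeasurable[ℱ n] (X n)
  condExp_ae_eq (n : ℕ) : μ[φ|ℱ n] =ᵐ[μ] X n
  nonneg (n : ℕ) (ω : Ω) : 0 ≤ X n ω
  succ_le_mul (n : ℕ) : ∀ᵐ ω ∂μ, X (n + 1) ω ≤ N * X n ω
  ae_tendsto : ∀ᵐ ω ∂μ, Tendsto (fun n ↦ X n ω) atTop (𝓝 (φ ω))

/-- The running maximum `max u (X 0) ⋯ (X n)`. -/
noncomputable def runningMax {Ω : Type*} (u : ℝ) (X : ℕ → Ω → ℝ) (n : ℕ) (ω : Ω) : ℝ :=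
  max u (partialSups (fun k ↦ X k ω) n)

section RunningMax

variable {Ω : Type*} {u : ℝ} {X : ℕ → Ω → ℝ} {n : ℕ} {ω : Ω}

lemma le_runningMax : u ≤ runningMax u X n ω :=
  le_max_left _ _

lemma apply_le_runningMax : X n ω ≤ runningMax u X n ω :=
  (le_partialSups (fun k ↦ X k ω) n).trans (le_max_right _ _)

lemma runningMax_zero (h : X 0 ω ≤ u) : runningMax u X 0 ω = u := by
  rw [runningMax, partialSups_zero, max_eq_left h]

lemma runningMax_succ :
    runningMax u X (n + 1) = fun ω ↦ max (runningMax u X n ω) (X (n + 1) ω) := by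
  ext ω
  rw [runningMax, runningMax, ← Order.succ_eq_add_one, partialSups_succ, max_assoc]

lemma runningMax_le {C : ℝ} (hu : u ≤ C) (h : ∀ k ≤ n, X k ω ≤ C) : runningMax u X n ω ≤ C :=
  max_le hu (partialSups_le _ _ _ h)

lemma stronglyMeasurable_runningMax {m : MeasurableSpace Ω}
    (hX : ∀ k ≤ n, StronglyMeasurable (X k)) : StronglyMeasurable (runningMax u X n) := by
  induction n with
  | zero => exact stronglyMeasurable_const.sup (by simpa using hX 0 le_rfl)
  | succ n ih =>
    rw [runningMax_succ]
    exact (ih fun k hk ↦ hX k (hk.trans n.le_succ)).sup (hX (n + 1) le_rfl)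

lemma tendsto_runningMax (h : BddAbove (range fun n ↦ X n ω)) :
    Tendsto (fun n ↦ runningMax u X n ω) atTop (𝓝 (max u (⨆ n, X n ω))) := by
  have hsup : Tendsto (partialSups fun n ↦ X n ω) atTop (𝓝 (⨆ n, X n ω)) := by
    rw [← ciSup_partialSups_eq h]
    exact tendsto_atTop_ciSup (partialSups_monotone _) (bddAbove_range_partialSups.2 h)
  exact tendsto_const_nhds.max hsup

lemma runningMax_le_max_iSup (h : BddAbove (range fun n ↦ X n ω)) :
    runningMax u X n ω ≤ max u (⨆ n, X n ω) :=
  runningMax_le (le_max_left _ _) fun k _ ↦ (le_ciSup h k).trans (le_max_right _ _)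

end RunningMax

lemma integrable_and_integral_le_of_ae_tendsto {α : Type*} {m₀ : MeasurableSpace α}
    {μ : Measure α} {g : ℕ → α → ℝ} {h : α → ℝ} {C : ℝ} (hg : ∀ n, Integrable (g n) μ)
    (hg₀ : ∀ n x, 0 ≤ g n x) (hC : ∀ n, ∫ x, g n x ∂μ ≤ C)
    (hgh : ∀ᵐ x ∂μ, Tendsto (fun n ↦ g n x) atTop (𝓝 (h x))) :
    Integrable h μ ∧ ∫ x, h x ∂μ ≤ C := by
  have hmeas : AEStronglyMeasurable h μ :=
    aestronglyMeasurable_of_tendsto_ae _ (fun n ↦ (hg n).aestronglyMeasurable) hgh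
  have hh₀ : 0 ≤ᵐ[μ] h := by
    filter_upwards [hgh] with x hx using ge_of_tendsto' hx fun n ↦ hg₀ n x
  have hC₀ : 0 ≤ C := (integral_nonneg (hg₀ 0)).trans (hC 0)
  have fatou : ∫⁻ x, ENNReal.ofReal (h x) ∂μ ≤ ENNReal.ofReal C := by
    calc ∫⁻ x, ENNReal.ofReal (h x) ∂μ
        = ∫⁻ x, liminf (fun n ↦ ENNReal.ofReal (g n x)) atTop ∂μ :=
          lintegral_congr_ae <| hgh.mono fun x hx ↦
            ((ENNReal.continuous_ofReal.tendsto _).comp hx).liminf_eq.symm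
      _ ≤ liminf (fun n ↦ ∫⁻ x, ENNReal.ofReal (g n x) ∂μ) atTop :=
          lintegral_liminf_le' fun n ↦ (hg n).aestronglyMeasurable.aemeasurable.ennreal_ofReal
      _ ≤ ENNReal.ofReal C := by
          refine liminf_le_of_frequently_le' (Frequently.of_forall fun n ↦ ?_)
          rw [← ofReal_integral_eq_lintegral_ofReal (hg n) (ae_of_all _ (hg₀ n))]
          exact ENNReal.ofReal_le_ofReal (hC n)
  refine ⟨(lintegral_ofReal_ne_top_iff_integrable hmeas hh₀).1
    (ne_top_of_le_ne_top ENNReal.ofReal_ne_top fatou), ?_⟩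
  rw [integral_eq_lintegral_of_nonneg_ae hh₀ hmeas]
  exact ENNReal.toReal_le_of_le_ofReal hC₀ fatou

namespace IsRegularMartingale

variable {Ω : Type*} {m₀ : MeasurableSpace Ω} {μ : Measure Ω}
  {N p u : ℝ} {ℱ : Filtration ℕ m₀} {φ : Ω → ℝ} {X : ℕ → Ω → ℝ}

lemma integrable (h : IsRegularMartingale N ℱ φ X μ) (n : ℕ) : Integrable (X n) μ :=
  integrable_condExp.congr (h.condExp_ae_eq n)

lemma ae_le_pow_mul (h : IsRegularMartingale N ℱ φ X μ) (hN : 0 ≤ N)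
    (hu : ∀ᵐ ω ∂μ, X 0 ω ≤ u) (n : ℕ) : ∀ᵐ ω ∂μ, X n ω ≤ N ^ n * u := by
  induction n with
  | zero => simpa using hu
  | succ n ih =>
    filter_upwards [ih, h.succ_le_mul n] with ω hω hstep
    rw [pow_succ', mul_assoc]
    exact hstep.trans (by gcongr)

lemma exists_ae_runningMax_le (h : IsRegularMartingale N ℱ φ X μ) (hN : 0 ≤ N)
    (hu : ∀ᵐ ω ∂μ, X 0 ω ≤ u) (n : ℕ) : ∃ C, ∀ᵐ ω ∂μ, runningMax u X n ω ≤ C := by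
  induction n with
  | zero => exact ⟨u, hu.mono fun ω hω ↦ (runningMax_zero hω).le⟩
  | succ n ih =>
    obtain ⟨C, hC⟩ := ih
    refine ⟨max C (N ^ (n + 1) * u), ?_⟩
    filter_upwards [hC, h.ae_le_pow_mul hN hu (n + 1)] with ω hω hX
    rw [runningMax_succ]
    exact max_le_max hω hX

lemma stronglyMeasurable_runningMax_rpow (h : IsRegularMartingale N ℱ φ X μ) {r : ℝ} (hr : 0 ≤ r)
    (n : ℕ) : StronglyMeasurable[ℱ n] fun ω ↦ runningMax u X n ω ^ r :=
  (Real.continuous_rpow_const hr).comp_stronglyMeasurable <|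
    stronglyMeasurable_runningMax fun k hk ↦ (h.stronglyMeasurable k).mono (ℱ.mono hk)

lemma exists_ae_norm_runningMax_rpow_le (h : IsRegularMartingale N ℱ φ X μ) (hN : 0 ≤ N)
    (hu₀ : 0 ≤ u) (hu : ∀ᵐ ω ∂μ, X 0 ω ≤ u) {r : ℝ} (hr : 0 ≤ r) (n : ℕ) :
    ∃ C, ∀ᵐ ω ∂μ, ‖runningMax u X n ω ^ r‖ ≤ C := by
  obtain ⟨C, hC⟩ := h.exists_ae_runningMax_le hN hu n
  refine ⟨C ^ r, hC.mono fun ω hω ↦ ?_⟩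
  have hm : 0 ≤ runningMax u X n ω := hu₀.trans le_runningMax
  rw [Real.norm_of_nonneg (by positivity)]
  gcongr

lemma integrable_runningMax_rpow_mul (h : IsRegularMartingale N ℱ φ X μ) (hN : 0 ≤ N)
    (hu₀ : 0 ≤ u) (hu : ∀ᵐ ω ∂μ, X 0 ω ≤ u) {r : ℝ} (hr : 0 ≤ r) (n : ℕ) {Y : Ω → ℝ}
    (hY : Integrable Y μ) : Integrable (fun ω ↦ runningMax u X n ω ^ r * Y ω) μ :=
  let ⟨_, hC⟩ := h.exists_ae_norm_runningMax_rpow_le hN hu₀ hu hr n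
  hY.bdd_mul ((h.stronglyMeasurable_runningMax_rpow hr n).mono (ℱ.le n)).aestronglyMeasurable hC

lemma ae_nonneg (h : IsRegularMartingale N ℱ φ X μ) : ∀ᵐ ω ∂μ, 0 ≤ φ ω :=
  h.ae_tendsto.mono fun ω hω ↦ ge_of_tendsto' hω fun n ↦ h.nonneg n ω

lemma ae_bddAbove (h : IsRegularMartingale N ℱ φ X μ) :
    ∀ᵐ ω ∂μ, BddAbove (range fun n ↦ X n ω) :=
  h.ae_tendsto.mono fun _ hω ↦ hω.bddAbove_range

variable [IsProbabilityMeasure μ]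

lemma integral_eq (h : IsRegularMartingale N ℱ φ X μ) (n : ℕ) : ∫ ω, X n ω ∂μ = ∫ ω, φ ω ∂μ := by
  rw [← integral_congr_ae (h.condExp_ae_eq n), integral_condExp (ℱ.le n)]

lemma integral_mul_eq (h : IsRegularMartingale N ℱ φ X μ) (hφ : Integrable φ μ) {n k : ℕ}
    (hnk : n ≤ k) {Y : Ω → ℝ} {C : ℝ} (hY : StronglyMeasurable[ℱ n] Y)
    (hYC : ∀ᵐ ω ∂μ, ‖Y ω‖ ≤ C) : ∫ ω, Y ω * X k ω ∂μ = ∫ ω, Y ω * φ ω ∂μ := by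
  have pullout : μ[Y * φ|ℱ k] =ᵐ[μ] Y * X k :=
    (condExp_stronglyMeasurable_mul_of_bound (ℱ.le k) (hY.mono (ℱ.mono hnk)) hφ C hYC).trans
      ((EventuallyEq.refl _ Y).mul (h.condExp_ae_eq k))
  calc ∫ ω, Y ω * X k ω ∂μ = ∫ ω, (μ[Y * φ|ℱ k]) ω ∂μ := (integral_congr_ae pullout).symm
    _ = ∫ ω, Y ω * φ ω ∂μ := integral_condExp (ℱ.le k)

lemma integrable_runningMax_rpow (h : IsRegularMartingale N ℱ φ X μ) (hN : 0 ≤ N)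
    (hu₀ : 0 ≤ u) (hu : ∀ᵐ ω ∂μ, X 0 ω ≤ u) {r : ℝ} (hr : 0 ≤ r) (n : ℕ) :
    Integrable (fun ω ↦ runningMax u X n ω ^ r) μ :=
  let ⟨_, hC⟩ := h.exists_ae_norm_runningMax_rpow_le hN hu₀ hu hr n
  .of_bound ((h.stronglyMeasurable_runningMax_rpow hr n).mono (ℱ.le n)).aestronglyMeasurable _ hC

lemma integral_maxPotential (h : IsRegularMartingale N ℱ φ X μ) (hφ : Integrable φ μ) (hN : 0 ≤ N)
    (hp : 1 < p) (hu₀ : 0 ≤ u) (hu : ∀ᵐ ω ∂μ, X 0 ω ≤ u) (a b : ℝ) {n k : ℕ} (hnk : n ≤ k) :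
    ∫ ω, maxPotential a b p (runningMax u X n ω) (X k ω) ∂μ =
      a * ∫ ω, runningMax u X n ω ^ p ∂μ - b * ∫ ω, runningMax u X n ω ^ (p - 1) * φ ω ∂μ := by
  have hp' : 0 ≤ p - 1 := by linarith
  obtain ⟨C, hC⟩ := h.exists_ae_norm_runningMax_rpow_le hN hu₀ hu hp' n
  simp only [maxPotential]
  rw [integral_sub ((h.integrable_runningMax_rpow hN hu₀ hu (by linarith) n).const_mul a)
    ((h.integrable_runningMax_rpow_mul hN hu₀ hu hp' n (h.integrable k)).const_mul b),
    integral_const_mul, integral_const_mul,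
    h.integral_mul_eq hφ hnk (h.stronglyMeasurable_runningMax_rpow hp' n) hC]

lemma integrable_maxPotential (h : IsRegularMartingale N ℱ φ X μ) (hN : 0 ≤ N) (hp : 1 < p)
    (hu₀ : 0 ≤ u) (hu : ∀ᵐ ω ∂μ, X 0 ω ≤ u) (a b : ℝ) (n k : ℕ) :
    Integrable (fun ω ↦ maxPotential a b p (runningMax u X n ω) (X k ω)) μ :=
  ((h.integrable_runningMax_rpow hN hu₀ hu (by linarith) n).const_mul a).sub
    ((h.integrable_runningMax_rpow_mul hN hu₀ hu (by linarith) n (h.integrable k)).const_mul b)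

lemma maxPotential_le_integral (h : IsRegularMartingale N ℱ φ X μ) (hφ : Integrable φ μ)
    (hN : 0 ≤ N) (hp : 1 < p) (hu₀ : 0 < u) (hu : ∀ᵐ ω ∂μ, X 0 ω ≤ u) {a b : ℝ}
    (hab : ∀ ⦃m y : ℝ⦄, 0 < m → y ≤ N * m →
      maxPotential a b p m y ≤ maxPotential a b p (max m y) y) (n : ℕ) :
    maxPotential a b p u (∫ ω, φ ω ∂μ) ≤
      a * ∫ ω, runningMax u X n ω ^ p ∂μ - b * ∫ ω, runningMax u X n ω ^ (p - 1) * φ ω ∂μ := by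
  induction n with
  | zero =>
    have h₀ : ∀ᵐ ω ∂μ, runningMax u X 0 ω = u := hu.mono fun ω hω ↦ runningMax_zero hω
    have h₁ : ∫ ω, runningMax u X 0 ω ^ p ∂μ = u ^ p := by
      rw [integral_congr_ae (h₀.mono fun ω hω ↦ congrArg (· ^ p) hω)]
      simp
    have h₂ : ∫ ω, runningMax u X 0 ω ^ (p - 1) * φ ω ∂μ = u ^ (p - 1) * ∫ ω, φ ω ∂μ := by
      rw [integral_congr_ae (h₀.mono fun ω hω ↦ congrArg (· ^ (p - 1) * φ ω) hω),
        integral_const_mul]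
    rw [h₁, h₂, maxPotential]
  | succ n ih =>
    refine ih.trans ?_
    rw [← h.integral_maxPotential hφ hN hp hu₀.le hu a b n.le_succ,
      ← h.integral_maxPotential hφ hN hp hu₀.le hu a b (le_refl (n + 1))]
    refine integral_mono_ae (h.integrable_maxPotential hN hp hu₀.le hu a b n (n + 1))
      (h.integrable_maxPotential hN hp hu₀.le hu a b (n + 1) (n + 1)) ?_
    filter_upwards [h.succ_le_mul n] with ω hω
    simp only [runningMax_succ]
    exact hab (hu₀.trans_le le_runningMax)
      (hω.trans (mul_le_mul_of_nonneg_left apply_le_runningMax hN))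

lemma sharp_le_integral_runningMax (h : IsRegularMartingale N ℱ φ X μ) (hφ : Integrable φ μ)
    (hN : 1 < N) (hp : 1 < p) (hu₀ : 0 < u) (hu : ∀ᵐ ω ∂μ, X 0 ω ≤ u) (n : ℕ) :
    u ^ p + sharpConst N p * (∫ ω, X n ω ^ p ∂μ - u ^ (p - 1) * ∫ ω, φ ω ∂μ) ≤
      ∫ ω, runningMax u X n ω ^ p ∂μ := by
  have hp' : 0 ≤ p - 1 := by linarith
  have hN₀ : 0 ≤ N := by linarith
  have potential := h.maxPotential_le_integral hφ hN₀ hp hu₀ hu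
    (fun _ _ ↦ maxPotential_sharpConst_le_max hN hp) n
  have hle : ∫ ω, X n ω ^ p ∂μ ≤ ∫ ω, runningMax u X n ω ^ (p - 1) * φ ω ∂μ := by
    obtain ⟨C, hC⟩ := h.exists_ae_norm_runningMax_rpow_le hN₀ hu₀.le hu hp' n
    rw [← h.integral_mul_eq hφ le_rfl (h.stronglyMeasurable_runningMax_rpow hp' n) hC]
    refine integral_mono_of_nonneg (ae_of_all _ fun ω ↦ Real.rpow_nonneg (h.nonneg n ω) p)
      (h.integrable_runningMax_rpow_mul hN₀ hu₀.le hu hp' n (h.integrable n))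
      (ae_of_all _ fun ω ↦ ?_)
    have hX := h.nonneg n ω
    simp only [← rpow_sub_one_mul_self hX hp]
    gcongr
    exact apply_le_runningMax
  have hc : 0 < sharpConst N p := one_pos.trans (one_lt_sharpConst hN hp)
  rw [maxPotential] at potential
  linarith [mul_le_mul_of_nonneg_left hle hc.le]

lemma exists_integral_runningMax_rpow_le (h : IsRegularMartingale N ℱ φ X μ)
    (hφ : Integrable φ μ) (hφp : Integrable (fun ω ↦ φ ω ^ p) μ) (hN : 0 ≤ N) (hp : 1 < p)
    (hu₀ : 0 < u) (hu : ∀ᵐ ω ∂μ, X 0 ω ≤ u) :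
    ∃ C, ∀ n, ∫ ω, runningMax u X n ω ^ p ∂μ ≤ C := by
  set δ : ℝ := (p - 1) / (2 * p) with hδ
  have hδ₀ : 0 < δ := div_pos (by linarith) (by linarith)
  set D : ℝ := (p - 1) * u ^ p + p * (δ ^ (1 - p) * ∫ ω, φ ω ^ p ∂μ)
  refine ⟨D / ((p - 1) / 2), fun n ↦ (le_div_iff₀' (by linarith)).2 ?_⟩
  have hm : Integrable (fun ω ↦ runningMax u X n ω ^ p) μ :=
    h.integrable_runningMax_rpow hN hu₀.le hu (by linarith) n
  have young : ∫ ω, runningMax u X n ω ^ (p - 1) * φ ω ∂μ ≤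
      δ * ∫ ω, runningMax u X n ω ^ p ∂μ + δ ^ (1 - p) * ∫ ω, φ ω ^ p ∂μ := by
    rw [← integral_const_mul, ← integral_const_mul,
      ← integral_add (hm.const_mul δ) (hφp.const_mul _)]
    refine integral_mono_ae
      (h.integrable_runningMax_rpow_mul hN hu₀.le hu (by linarith) n hφ)
      ((hm.const_mul δ).add (hφp.const_mul _)) (h.ae_nonneg.mono fun ω hω ↦ ?_)
    exact rpow_sub_one_mul_le_add hδ₀ hp (hu₀.le.trans le_runningMax) hω
  have potential := h.maxPotential_le_integral hφ hN hp hu₀ hu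
    (fun _ _ ↦ maxPotential_doob_le_max hp) n
  have hmean : 0 ≤ u ^ (p - 1) * ∫ ω, φ ω ∂μ :=
    mul_nonneg (by positivity) (integral_nonneg_of_ae h.ae_nonneg)
  rw [maxPotential] at potential
  have hpδ : p * δ = (p - 1) / 2 := by rw [hδ]; field_simp
  linear_combination potential + p * hmean + p * young +
    (∫ ω, runningMax u X n ω ^ p ∂μ) * hpδ

lemma integrable_max_iSup_rpow (h : IsRegularMartingale N ℱ φ X μ)
    (hφ : Integrable φ μ) (hφp : Integrable (fun ω ↦ φ ω ^ p) μ) (hN : 0 ≤ N) (hp : 1 < p)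
    (hu₀ : 0 < u) (hu : ∀ᵐ ω ∂μ, X 0 ω ≤ u) :
    Integrable (fun ω ↦ max u (⨆ n, X n ω) ^ p) μ := by
  obtain ⟨C, hC⟩ := h.exists_integral_runningMax_rpow_le hφ hφp hN hp hu₀ hu
  refine (integrable_and_integral_le_of_ae_tendsto
    (fun n ↦ h.integrable_runningMax_rpow hN hu₀.le hu (by linarith) n)
    (fun n ω ↦ Real.rpow_nonneg (hu₀.le.trans le_runningMax) p) hC ?_).1
  exact h.ae_bddAbove.mono fun ω hω ↦ (tendsto_runningMax hω).rpow_const (.inr (by linarith))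

theorem sharp_le_integral_max_iSup (h : IsRegularMartingale N ℱ φ X μ)
    (hφ : Integrable φ μ) (hφp : Integrable (fun ω ↦ φ ω ^ p) μ) (hN : 1 < N) (hp : 1 < p)
    (hu₀ : 0 < u) (hu : ∀ᵐ ω ∂μ, X 0 ω ≤ u) :
    u ^ p + sharpConst N p * (∫ ω, φ ω ^ p ∂μ - u ^ (p - 1) * ∫ ω, φ ω ∂μ) ≤
      ∫ ω, max u (⨆ n, X n ω) ^ p ∂μ := by
  have hN₀ : 0 ≤ N := by linarith
  have hp₀ : 0 ≤ p := by linarith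
  have hc : 0 < sharpConst N p := one_pos.trans (one_lt_sharpConst hN hp)
  have hm_le (n : ℕ) :
      ∫ ω, runningMax u X n ω ^ p ∂μ ≤ ∫ ω, max u (⨆ n, X n ω) ^ p ∂μ := by
    refine integral_mono_ae (h.integrable_runningMax_rpow hN₀ hu₀.le hu hp₀ n)
      (h.integrable_max_iSup_rpow hφ hφp hN₀ hp hu₀ hu) (h.ae_bddAbove.mono fun ω hω ↦ ?_)
    exact Real.rpow_le_rpow (hu₀.le.trans le_runningMax) (runningMax_le_max_iSup hω) hp₀
  have hX_int (n : ℕ) : Integrable (fun ω ↦ X n ω ^ p) μ := by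
    refine (h.integrable_runningMax_rpow hN₀ hu₀.le hu hp₀ n).mono'
      ((h.integrable n).aestronglyMeasurable.aemeasurable.pow_const p).aestronglyMeasurable
      (ae_of_all _ fun ω ↦ ?_)
    rw [Real.norm_of_nonneg (Real.rpow_nonneg (h.nonneg n ω) p)]
    exact Real.rpow_le_rpow (h.nonneg n ω) apply_le_runningMax hp₀
  have fatou : ∫ ω, φ ω ^ p ∂μ ≤ (∫ ω, max u (⨆ n, X n ω) ^ p ∂μ - u ^ p) / sharpConst N p +
      u ^ (p - 1) * ∫ ω, φ ω ∂μ := by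
    refine (integrable_and_integral_le_of_ae_tendsto hX_int
      (fun n ω ↦ Real.rpow_nonneg (h.nonneg n ω) p) (fun n ↦ ?_)
      (h.ae_tendsto.mono fun ω hω ↦ hω.rpow_const (.inr hp₀))).2
    rw [← sub_le_iff_le_add, le_div_iff₀' hc, le_sub_iff_add_le']
    exact (h.sharp_le_integral_runningMax hφ hN hp hu₀ hu n).trans (hm_le n)
  rw [← sub_le_iff_le_add, le_div_iff₀' hc] at fatou
  linarith

lemma submartingale (h : IsRegularMartingale N ℱ φ X μ) : Submartingale X ℱ μ := by
  have hmart : Martingale X ℱ μ := by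
    refine ⟨h.stronglyMeasurable, fun i j hij ↦ ?_⟩
    calc μ[X j|ℱ i] =ᵐ[μ] μ[μ[φ|ℱ j]|ℱ i] := condExp_congr_ae (h.condExp_ae_eq j).symm
      _ =ᵐ[μ] μ[φ|ℱ i] := condExp_condExp_of_le (ℱ.mono hij) (ℱ.le j)
      _ =ᵐ[μ] X i := h.condExp_ae_eq i
  exact hmart.submartingale

lemma mul_measureReal_le_partialSups (h : IsRegularMartingale N ℱ φ X μ) {v : ℝ} (hv : 0 ≤ v)
    (n : ℕ) : v * μ.real {ω | v ≤ partialSups (fun k ↦ X k ω) n} ≤ ∫ ω, φ ω ∂μ := by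
  lift v to NNReal using hv
  have doob := maximal_ineq h.submartingale (fun n ω ↦ h.nonneg n ω) (ε := v) n
  simp only [← partialSups_eq_sup'_range] at doob
  have hle := ENNReal.toReal_mono ENNReal.ofReal_ne_top doob
  rw [ENNReal.toReal_mul, ENNReal.coe_toReal, ENNReal.toReal_ofReal
    (integral_nonneg (h.nonneg n))] at hle
  rw [← h.integral_eq n]
  exact hle.trans (setIntegral_le_integral (h.integrable n) (ae_of_all _ (h.nonneg n)))

lemma mul_measureReal_lt_iSup_le (h : IsRegularMartingale N ℱ φ X μ) {v : ℝ} (hv : 0 ≤ v) :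
    v * μ.real {ω | v < ⨆ n, X n ω} ≤ ∫ ω, φ ω ∂μ := by
  set A : ℕ → Set Ω := fun n ↦ {ω | v ≤ partialSups (fun k ↦ X k ω) n}
  have hA : Monotone A := fun i j hij ω (hω : v ≤ _) ↦
    mem_ofPred.2 (hω.trans (partialSups_monotone _ hij))
  have hsub : {ω | v < ⨆ n, X n ω} ⊆ ⋃ n, A n := fun ω (hω : v < _) ↦ by
    obtain ⟨n, hn⟩ := exists_lt_of_lt_ciSup hω
    exact mem_iUnion.2 ⟨n, hn.le.trans (le_partialSups (fun k ↦ X k ω) n)⟩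
  have hlim : Tendsto (fun n ↦ v * μ.real (A n)) atTop (𝓝 (v * μ.real (⋃ n, A n))) :=
    ((ENNReal.tendsto_toReal (measure_ne_top μ _)).comp
      (tendsto_measure_iUnion_atTop hA)).const_mul v
  calc v * μ.real {ω | v < ⨆ n, X n ω} ≤ v * μ.real (⋃ n, A n) := by gcongr; finiteness
    _ ≤ ∫ ω, φ ω ∂μ := le_of_tendsto' hlim fun n ↦ h.mul_measureReal_le_partialSups hv n

theorem mul_measureReal_le_iSup_le (h : IsRegularMartingale N ℱ φ X μ) (hu : 0 < u) :
    u * μ.real {ω | u ≤ ⨆ n, X n ω} ≤ ∫ ω, φ ω ∂μ := by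
  have hlim : Tendsto (fun v ↦ v * μ.real {ω | u ≤ ⨆ n, X n ω}) (𝓝[<] u)
      (𝓝 (u * μ.real {ω | u ≤ ⨆ n, X n ω})) :=
    (tendsto_nhdsWithin_of_tendsto_nhds tendsto_id).mul_const _
  refine le_of_tendsto hlim ?_
  filter_upwards [Ioo_mem_nhdsLT hu] with v hv
  refine le_trans ?_ (h.mul_measureReal_lt_iSup_le hv.1.le)
  gcongr
  exacts [hv.1.le, by finiteness, hv.2]

end IsRegularMartingale

section Quantile

lemma exists_measure_Ioi_le_le_measure_Ici (ν : Measure ℝ) [IsFiniteMeasure ν] {κ : ENNReal}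
    (hκ : 0 < κ) {a : ℝ} (ha : κ ≤ ν (Ici a)) : ∃ u ≥ a, ν (Ioi u) ≤ κ ∧ κ ≤ ν (Ici u) := by
  set S : Set ℝ := {t | κ ≤ ν (Ici t)}
  have haS : a ∈ S := ha
  have hbdd : BddAbove S := by
    by_contra hunbdd
    have hle (n : ℕ) : κ ≤ ν (Ici (n : ℝ)) := by
      obtain ⟨t, ht, hnt⟩ := not_bddAbove_iff.1 hunbdd n
      exact le_trans ht (measure_mono (Ici_subset_Ici.2 hnt.le))
    have hlim := tendsto_measure_iInter_atTop (μ := ν) (s := fun n : ℕ ↦ Ici (n : ℝ))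
      (fun n ↦ measurableSet_Ici.nullMeasurableSet)
      (fun i j hij ↦ Ici_subset_Ici.2 (Nat.cast_le.2 hij)) ⟨0, measure_ne_top ν _⟩
    have hempty : ⋂ n : ℕ, Ici (n : ℝ) = ∅ := by
      refine eq_empty_of_forall_notMem fun x hx ↦ ?_
      obtain ⟨n, hn⟩ := exists_nat_gt x
      exact hn.not_ge (mem_iInter.1 hx n)
    rw [hempty, measure_empty] at hlim
    exact hκ.not_ge (ge_of_tendsto' hlim hle)
  refine ⟨sSup S, le_csSup hbdd haS, ?_, ?_⟩
  · obtain ⟨v, hv, hvu, hlim⟩ := exists_seq_strictAnti_tendsto (sSup S)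
    have hmono : Monotone fun n ↦ Ici (v n) := fun i j hij ↦ Ici_subset_Ici.2 (hv.antitone hij)
    rw [← iUnion_Ici_eq_Ioi_of_lt_of_tendsto hvu hlim, hmono.measure_iUnion]
    exact iSup_le fun n ↦ (not_le.1 fun hn ↦ (hvu n).not_ge (le_csSup hbdd hn)).le
  · obtain ⟨v, hv, hlim, hvS⟩ := exists_seq_tendsto_sSup ⟨a, haS⟩ hbdd
    have hanti : Antitone fun n ↦ Ici (v n) := fun i j hij ↦ Ici_subset_Ici.2 (hv hij)
    have hInter : ⋂ n, Ici (v n) = Ici (sSup S) := by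
      ext x
      simp only [mem_iInter, mem_Ici]
      exact ⟨le_of_tendsto' hlim, fun hx n ↦ (le_csSup hbdd (hvS n)).trans hx⟩
    rw [← hInter]
    exact ge_of_tendsto' (tendsto_measure_iInter_atTop
      (fun n ↦ measurableSet_Ici.nullMeasurableSet) hanti ⟨0, measure_ne_top ν _⟩) hvS

lemma exists_measurableSet_between_measure_eq (μ : Measure ℝ) [IsFiniteMeasure μ]
    [NullSingletonClass μ] {A B : Set ℝ} (hA : MeasurableSet A) (hB : MeasurableSet B)
    (hAB : A ⊆ B) {κ : ENNReal} (hκA : μ A ≤ κ) (hκB : κ ≤ μ B) :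
    ∃ E, MeasurableSet E ∧ A ⊆ E ∧ E ⊆ B ∧ μ E = κ := by
  rcases hκA.eq_or_lt with h | hκA'
  · exact ⟨A, hA, subset_rfl, hAB, h⟩
  rcases hκB.eq_or_lt with h | hκB'
  · exact ⟨B, hB, hAB, subset_rfl, h.symm⟩
  set ν := μ.restrict (B \ A)
  have hν : κ - μ A < ν univ := by
    rw [Measure.restrict_apply_univ, measure_sdiff hAB hA.nullMeasurableSet (measure_ne_top μ A)]
    exact (ENNReal.cancel_of_ne (measure_ne_top μ A)).tsub_lt_tsub_right_of_le hκA hκB'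
  obtain ⟨a, ha⟩ := ((tendsto_order.1 (tendsto_measure_Ici_atBot ν)).1 _ hν).exists
  obtain ⟨t, -, ht, ht'⟩ :=
    exists_measure_Ioi_le_le_measure_Ici ν (tsub_pos_of_lt hκA') ha.le
  have hνt : μ ((B \ A) ∩ Ici t) = κ - μ A := by
    rw [inter_comm, ← Measure.restrict_apply measurableSet_Ici]
    exact le_antisymm ((measure_congr Ioi_ae_eq_Ici).symm.trans_le ht) ht'
  have hBA : MeasurableSet ((B \ A) ∩ Ici t) := (hB.diff hA).inter measurableSet_Ici
  refine ⟨A ∪ (B \ A) ∩ Ici t, hA.union hBA, subset_union_left,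
    union_subset hAB (inter_subset_left.trans sdiff_subset), ?_⟩
  rw [measure_union (disjoint_sdiff_right.mono_right inter_subset_left) hBA, hνt,
    add_tsub_cancel_of_le hκA]

end Quantile

section LevelSet

variable {Ω : Type*} {m₀ : MeasurableSpace Ω} {μ : Measure Ω} [IsFiniteMeasure μ] {g : Ω → ℝ}
  {u p : ℝ} {E : Set Ω}

lemma setIntegral_max_rpow (hgu : Integrable (fun ω ↦ max u (g ω) ^ p) μ) :
    ∫ ω in E, max u (g ω) ^ p ∂μ =
      μ.real E * u ^ p + ∫ ω in E, (max u (g ω) ^ p - u ^ p) ∂μ := by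
  rw [integral_sub hgu.integrableOn (integrable_const _), setIntegral_const, smul_eq_mul,
    add_sub_cancel]

lemma setIntegral_rpow_le (hg : ∀ ω, 0 ≤ g ω) (hu : 0 ≤ u) (hp : 0 ≤ p)
    (hgu : Integrable (fun ω ↦ max u (g ω) ^ p) μ) :
    ∫ ω in E, g ω ^ p ∂μ ≤ μ.real E * u ^ p + ∫ ω, (max u (g ω) ^ p - u ^ p) ∂μ := by
  have hnonneg : 0 ≤ fun ω ↦ max u (g ω) ^ p - u ^ p := fun ω ↦
    sub_nonneg.2 (Real.rpow_le_rpow hu (le_max_left _ _) hp)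
  calc ∫ ω in E, g ω ^ p ∂μ ≤ ∫ ω in E, max u (g ω) ^ p ∂μ :=
        integral_mono_of_nonneg (ae_of_all _ fun ω ↦ Real.rpow_nonneg (hg ω) p)
          hgu.integrableOn (ae_of_all _ fun ω ↦ Real.rpow_le_rpow (hg ω) (le_max_right _ _) hp)
    _ = μ.real E * u ^ p + ∫ ω in E, (max u (g ω) ^ p - u ^ p) ∂μ := setIntegral_max_rpow hgu
    _ ≤ μ.real E * u ^ p + ∫ ω, (max u (g ω) ^ p - u ^ p) ∂μ := by
        refine add_le_add_right ?_ _
        exact setIntegral_le_integral (hgu.sub (integrable_const _)) (ae_of_all _ hnonneg)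

lemma setIntegral_rpow_eq_of_levelSet (hE : MeasurableSet E) (hlt : {ω | u < g ω} ⊆ E)
    (hle : E ⊆ {ω | u ≤ g ω}) (hgu : Integrable (fun ω ↦ max u (g ω) ^ p) μ) :
    ∫ ω in E, g ω ^ p ∂μ = μ.real E * u ^ p + ∫ ω, (max u (g ω) ^ p - u ^ p) ∂μ := by
  have hoff : ∀ ω ∉ E, max u (g ω) ^ p - u ^ p = 0 := fun ω hω ↦ by
    rw [max_eq_left (not_lt.1 fun h ↦ hω (hlt h)), sub_self]
  calc ∫ ω in E, g ω ^ p ∂μ = ∫ ω in E, max u (g ω) ^ p ∂μ :=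
        setIntegral_congr_fun hE fun ω hω ↦ by simp only [max_eq_right (show u ≤ g ω from hle hω)]
    _ = μ.real E * u ^ p + ∫ ω in E, (max u (g ω) ^ p - u ^ p) ∂μ := setIntegral_max_rpow hgu
    _ = μ.real E * u ^ p + ∫ ω, (max u (g ω) ^ p - u ^ p) ∂μ := by
        rw [setIntegral_eq_integral_of_forall_compl_eq_zero hoff]

end LevelSet

lemma exists_levelSet_measureReal_eq {μ : Measure ℝ} [IsProbabilityMeasure μ]
    [NullSingletonClass μ] {g : ℝ → ℝ} (hg : Measurable g) {f κ : ℝ} (hf : ∀ᵐ x ∂μ, f ≤ g x)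
    (hκ : κ ∈ Ioc (0 : ℝ) 1) :
    ∃ u ≥ f, ∃ E, MeasurableSet E ∧ {x | u < g x} ⊆ E ∧ E ⊆ {x | u ≤ g x} ∧ μ.real E = κ := by
  have : IsProbabilityMeasure (μ.map g) := Measure.isProbabilityMeasure_map hg.aemeasurable
  have hfull : ENNReal.ofReal κ ≤ μ.map g (Ici f) := by
    rw [Measure.map_apply hg measurableSet_Ici, (prob_compl_eq_zero_iff
      (hg measurableSet_Ici)).1 hf]
    exact ENNReal.ofReal_le_one.2 hκ.2
  obtain ⟨u, hfu, hlt, hle⟩ :=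
    exists_measure_Ioi_le_le_measure_Ici (μ.map g) (ENNReal.ofReal_pos.2 hκ.1) hfull
  rw [Measure.map_apply hg measurableSet_Ioi] at hlt
  rw [Measure.map_apply hg measurableSet_Ici] at hle
  obtain ⟨E, hE, hltE, hEle, hκE⟩ := exists_measurableSet_between_measure_eq μ
    (hg measurableSet_Ioi) (hg measurableSet_Ici) (preimage_mono Ioi_subset_Ici_self) hlt hle
  exact ⟨u, hfu, E, hE, hltE, hEle, by rw [measureReal_def, hκE, ENNReal.toReal_ofReal hκ.1.le]⟩

theorem IsRegularMartingale.exists_sharp_le_setIntegral {μ : Measure ℝ} [IsProbabilityMeasure μ]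
    [NullSingletonClass μ] {N p κ : ℝ} {ℱ : Filtration ℕ (inferInstance : MeasurableSpace ℝ)}
    {φ : ℝ → ℝ} {X : ℕ → ℝ → ℝ} (h : IsRegularMartingale N ℱ φ X μ) (hφ : Integrable φ μ)
    (hφp : Integrable (fun x ↦ φ x ^ p) μ) (hN : 1 < N) (hp : 1 < p)
    (hX₀ : ∀ᵐ x ∂μ, X 0 x = ∫ y, φ y ∂μ) (hφ₀ : 0 < ∫ x, φ x ∂μ) (hκ : κ ∈ Ioc (0 : ℝ) 1) :
    ∃ u ≥ ∫ x, φ x ∂μ, κ * u ≤ ∫ x, φ x ∂μ ∧ ∃ E, MeasurableSet E ∧ μ.real E = κ ∧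
      κ * u ^ p ≤ ∫ x in E, (⨆ n, X n x) ^ p ∂μ ∧
      κ * u ^ p + sharpConst N p * (∫ x, φ x ^ p ∂μ - u ^ (p - 1) * ∫ x, φ x ∂μ) ≤
        ∫ x in E, (⨆ n, X n x) ^ p ∂μ := by
  have hg : Measurable fun x ↦ ⨆ n, X n x :=
    .iSup fun n ↦ ((h.stronglyMeasurable n).mono (ℱ.le n)).measurable
  have hfg : ∀ᵐ x ∂μ, ∫ y, φ y ∂μ ≤ ⨆ n, X n x := by
    filter_upwards [hX₀, h.ae_bddAbove] with x hx hbdd using hx ▸ le_ciSup hbdd 0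
  obtain ⟨u, hfu, E, hE, hltE, hEle, hκE⟩ := exists_levelSet_measureReal_eq hg hfg hκ
  have hu₀ : 0 < u := hφ₀.trans_le hfu
  have hu : ∀ᵐ x ∂μ, X 0 x ≤ u := hX₀.mono fun x hx ↦ hx.trans_le hfu
  have hmax := h.integrable_max_iSup_rpow hφ hφp (by linarith) hp hu₀ hu
  have hE_eq := setIntegral_rpow_eq_of_levelSet hE hltE hEle hmax
  have hsharp := h.sharp_le_integral_max_iSup hφ hφp hN hp hu₀ hu
  have hweak : κ * u ≤ ∫ x, φ x ∂μ := by
    rw [mul_comm, ← hκE]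
    exact (mul_le_mul_of_nonneg_left (measureReal_mono hEle) hu₀.le).trans
      (h.mul_measureReal_le_iSup_le hu₀)
  have hexcess : 0 ≤ ∫ x, (max u (⨆ n, X n x) ^ p - u ^ p) ∂μ := integral_nonneg fun x ↦
    sub_nonneg.2 (Real.rpow_le_rpow hu₀.le (le_max_left _ _) (by linarith))
  refine ⟨u, hfu, hweak, E, hE, hκE, ?_, ?_⟩
  · rw [hE_eq, hκE]
    linarith
  · rw [hE_eq, hκE, integral_sub hmax (integrable_const _), integral_const, probReal_univ,
      one_smul]
    linarith

/-- Lebesgue measure on `[0, 1)`, viewed as a measure on `ℝ`. -/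
noncomputable abbrev unitMeasure : Measure ℝ :=
  volume.restrict (Ico 0 1)

instance isProbabilityMeasure_unitMeasure : IsProbabilityMeasure unitMeasure :=
  ⟨by simp⟩

lemma ae_unitMeasure_of_forall {P : ℝ → Prop} (h : ∀ x ∈ Ico (0 : ℝ) 1, P x) :
    ∀ᵐ x ∂unitMeasure, P x :=
  ae_restrict_of_forall_mem measurableSet_Ico h

/-- The average of `|φ|` over the level `n` interval containing `x`, for `0 ≤ x`. -/
noncomputable def adicAvgAt (N : ℕ) (φ : ℝ → ℝ) (n : ℕ) (x : ℝ) : ℝ :=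
  adicAvg N φ n ⌊x * (N : ℝ) ^ n⌋₊

lemma measurableSet_adicItv {N m k : ℕ} : MeasurableSet (adicItv N m k) :=
  measurableSet_Ico

section AdicIntervals

variable {N : ℕ} [NeZero N] {φ : ℝ → ℝ} {m n k : ℕ} {x : ℝ}

lemma natCast_pow_pos (N : ℕ) [NeZero N] (n : ℕ) : (0 : ℝ) < (N : ℝ) ^ n := by
  have : (0 : ℝ) < N := Nat.cast_pos.2 (NeZero.pos N)
  positivity

lemma mem_adicItv_iff (hx : 0 ≤ x) : x ∈ adicItv N m k ↔ ⌊x * (N : ℝ) ^ m⌋₊ = k := by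
  have hN := natCast_pow_pos N m
  rw [Nat.floor_eq_iff (by positivity), adicItv, mem_Ico, div_le_iff₀ hN, lt_div_iff₀ hN]

lemma floor_mul_pow_lt (hx : x ∈ Ico (0 : ℝ) 1) (m : ℕ) : ⌊x * (N : ℝ) ^ m⌋₊ < N ^ m := by
  have hN := natCast_pow_pos N m
  rw [Nat.floor_lt (mul_nonneg hx.1 hN.le), Nat.cast_pow]
  exact mul_lt_of_lt_one_left hN hx.2

lemma floor_mul_pow_succ_div (x : ℝ) (n : ℕ) :
    ⌊x * (N : ℝ) ^ (n + 1)⌋₊ / N = ⌊x * (N : ℝ) ^ n⌋₊ := by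
  have hN : (N : ℝ) ≠ 0 := NeZero.ne _
  rw [← Nat.floor_div_natCast, pow_succ, ← mul_assoc, mul_div_cancel_right₀ _ hN]

lemma adicItv_subset (hk : k < N ^ m) : adicItv N m k ⊆ Ico 0 1 := by
  have hN := natCast_pow_pos N m
  refine Ico_subset_Ico (by positivity) ((div_le_one hN).2 ?_)
  exact_mod_cast hk

lemma volume_real_adicItv : volume.real (adicItv N m k) = ((N : ℝ) ^ m)⁻¹ := by
  have hN := natCast_pow_pos N m
  rw [adicItv, Real.volume_real_Ico_of_le (by gcongr; linarith)]
  ring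

lemma adicItv_succ_subset (hx : x ∈ Ico (0 : ℝ) 1) :
    adicItv N (n + 1) ⌊x * (N : ℝ) ^ (n + 1)⌋₊ ⊆ adicItv N n ⌊x * (N : ℝ) ^ n⌋₊ := by
  intro y hy
  have hy₀ : 0 ≤ y := (adicItv_subset (floor_mul_pow_lt hx (n + 1)) hy).1
  rw [mem_adicItv_iff hy₀] at hy ⊢
  rw [← floor_mul_pow_succ_div, hy, floor_mul_pow_succ_div]

lemma adicMax_eq_iSup (φ : ℝ → ℝ) (hx : x ∈ Ico (0 : ℝ) 1) :
    adicMax N φ x = ⨆ n, adicAvgAt N φ n x := by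
  rw [adicMax, iSup]
  congr 1
  ext r
  constructor
  · rintro ⟨m, k, -, hxk, rfl⟩
    exact ⟨m, congrArg (adicAvg N φ m) ((mem_adicItv_iff hx.1).1 hxk)⟩
  · rintro ⟨m, rfl⟩
    exact ⟨m, _, floor_mul_pow_lt hx m, (mem_adicItv_iff hx.1).2 rfl, rfl⟩

lemma adicAvg_nonneg (N : ℕ) (φ : ℝ → ℝ) (m k : ℕ) : 0 ≤ adicAvg N φ m k :=
  mul_nonneg (by positivity) (integral_nonneg fun _ ↦ abs_nonneg _)

lemma adicMax_nonneg (N : ℕ) (φ : ℝ → ℝ) (x : ℝ) : 0 ≤ adicMax N φ x := by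
  refine Real.sSup_nonneg ?_
  rintro _ ⟨m, k, -, -, rfl⟩
  exact adicAvg_nonneg N φ m k

lemma adicAvgAt_zero (N : ℕ) (φ : ℝ → ℝ) (hx : x ∈ Ico (0 : ℝ) 1) :
    adicAvgAt N φ 0 x = ∫ y, |φ y| ∂unitMeasure := by
  simp [adicAvgAt, adicAvg, adicItv, Nat.floor_eq_zero.2 hx.2]

lemma adicAvgAt_succ_le (hφ : Integrable φ unitMeasure) (n : ℕ) (hx : x ∈ Ico (0 : ℝ) 1) :
    adicAvgAt N φ (n + 1) x ≤ N * adicAvgAt N φ n x := by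
  have hmono : ∫ y in adicItv N (n + 1) ⌊x * (N : ℝ) ^ (n + 1)⌋₊, |φ y| ≤
      ∫ y in adicItv N n ⌊x * (N : ℝ) ^ n⌋₊, |φ y| :=
    setIntegral_mono_set (hφ.abs.mono_measure (Measure.restrict_mono_set volume
      (adicItv_subset (floor_mul_pow_lt hx n)))) (ae_of_all _ fun _ ↦ abs_nonneg _)
      (adicItv_succ_subset hx).eventuallyLE
  calc adicAvgAt N φ (n + 1) x
      ≤ (N : ℝ) ^ (n + 1) * ∫ y in adicItv N n ⌊x * (N : ℝ) ^ n⌋₊, |φ y| :=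
        mul_le_mul_of_nonneg_left hmono (by positivity)
    _ = N * adicAvgAt N φ n x := by rw [adicAvgAt, adicAvg, pow_succ', mul_assoc]

lemma integral_unitMeasure_eq_sum {h : ℝ → ℝ} (hh : Integrable h unitMeasure) (m : ℕ) :
    ∫ x, h x ∂unitMeasure = ∑ k ∈ Finset.range (N ^ m), ∫ x in adicItv N m k, h x := by
  have hunion : Ico (0 : ℝ) 1 = ⋃ k ∈ Finset.range (N ^ m), adicItv N m k := by
    refine Subset.antisymm (fun x hx ↦ ?_) (iUnion₂_subset fun k hk ↦
      adicItv_subset (Finset.mem_range.1 hk))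
    exact mem_iUnion₂.2
      ⟨_, Finset.mem_range.2 (floor_mul_pow_lt hx m), (mem_adicItv_iff hx.1).2 rfl⟩
  rw [unitMeasure, hunion]
  refine integral_biUnion_finset _ (fun _ _ ↦ measurableSet_adicItv) (fun i hi j _ hij ↦ ?_)
    fun k hk ↦ ?_
  · refine disjoint_left.2 fun x hxi hxj ↦ hij ?_
    have hx : 0 ≤ x := (adicItv_subset (Finset.mem_range.1 hi) hxi).1
    rw [← (mem_adicItv_iff hx).1 hxi, (mem_adicItv_iff hx).1 hxj]
  · exact hh.mono_measure (Measure.restrict_mono_set _ (adicItv_subset (Finset.mem_range.1 hk)))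

end AdicIntervals

/-- The filtration generated by the `N`-adic intervals: `x` lies in the interval of level `n` and
index `⌊x N ^ n⌋₊`. Points outside `[0, 1)` are irrelevant since `unitMeasure` does not charge
them. -/
noncomputable def adicFiltration (N : ℕ) [NeZero N] :
    Filtration ℕ (inferInstance : MeasurableSpace ℝ) where
  seq n := MeasurableSpace.comap (fun x : ℝ ↦ ⌊x * (N : ℝ) ^ n⌋₊) ⊤
  mono' := by
    refine monotone_nat_of_le_succ fun n ↦ ?_
    have hdiv : (fun x : ℝ ↦ ⌊x * (N : ℝ) ^ n⌋₊) =
        (· / N) ∘ fun x : ℝ ↦ ⌊x * (N : ℝ) ^ (n + 1)⌋₊ :=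
      funext fun x ↦ (floor_mul_pow_succ_div x n).symm
    rw [hdiv, ← MeasurableSpace.comap_comp]
    exact MeasurableSpace.comap_mono le_top
  le' n := Measurable.comap_le (Nat.measurable_floor.comp (measurable_id.mul_const _))

section AdicFiltration

variable {N : ℕ} [NeZero N] {φ : ℝ → ℝ}

lemma measurable_floor_adicFiltration (N : ℕ) [NeZero N] (n : ℕ) :
    Measurable[adicFiltration N n] fun x : ℝ ↦ ⌊x * (N : ℝ) ^ n⌋₊ :=
  Measurable.of_comap_le le_rfl

lemma stronglyMeasurable_adicAvgAt (N : ℕ) [NeZero N] (φ : ℝ → ℝ) (n : ℕ) :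
    StronglyMeasurable[adicFiltration N n] (adicAvgAt N φ n) :=
  ((measurable_from_top (f := adicAvg N φ n)).comp
    (measurable_floor_adicFiltration N n)).stronglyMeasurable

lemma setIntegral_adicItv_adicAvgAt {n k : ℕ} (hk : k < N ^ n) :
    ∫ x in adicItv N n k, adicAvgAt N φ n x = ∫ x in adicItv N n k, |φ x| := by
  have hconst : ∀ x ∈ adicItv N n k, adicAvgAt N φ n x = adicAvg N φ n k := fun x hx ↦
    congrArg (adicAvg N φ n) ((mem_adicItv_iff (adicItv_subset hk hx).1).1 hx)
  rw [setIntegral_congr_fun measurableSet_adicItv hconst, setIntegral_const, volume_real_adicItv,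
    adicAvg, smul_eq_mul, inv_mul_cancel_left₀ (natCast_pow_pos N n).ne']

lemma integrable_adicAvgAt (N : ℕ) [NeZero N] (φ : ℝ → ℝ) (n : ℕ) :
    Integrable (adicAvgAt N φ n) unitMeasure := by
  refine .of_bound ((stronglyMeasurable_adicAvgAt N φ n).mono
    ((adicFiltration N).le n)).aestronglyMeasurable
    (∑ k ∈ Finset.range (N ^ n), adicAvg N φ n k) (ae_unitMeasure_of_forall fun x hx ↦ ?_)
  rw [adicAvgAt, Real.norm_of_nonneg (adicAvg_nonneg N φ n _)]
  exact Finset.single_le_sum (fun k _ ↦ adicAvg_nonneg N φ n k)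
    (Finset.mem_range.2 (floor_mul_pow_lt hx n))

lemma condExp_adicFiltration (hφ : Integrable φ unitMeasure) (n : ℕ) :
    unitMeasure[fun x ↦ |φ x| | adicFiltration N n] =ᵐ[unitMeasure] adicAvgAt N φ n := by
  refine (ae_eq_condExp_of_forall_setIntegral_eq ((adicFiltration N).le n) hφ.abs
    (fun _ _ _ ↦ (integrable_adicAvgAt N φ n).integrableOn) (fun s hs _ ↦ ?_)
    (stronglyMeasurable_adicAvgAt N φ n).aestronglyMeasurable).symm
  have hs' : MeasurableSet s := (adicFiltration N).le n s hs
  obtain ⟨T, -, rfl⟩ := hs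
  set s : Set ℝ := (fun x : ℝ ↦ ⌊x * (N : ℝ) ^ n⌋₊) ⁻¹' T
  rw [← integral_indicator hs', ← integral_indicator hs',
    integral_unitMeasure_eq_sum (N := N) ((integrable_adicAvgAt N φ n).indicator hs') n,
    integral_unitMeasure_eq_sum (N := N) (hφ.abs.indicator hs') n]
  refine Finset.sum_congr rfl fun k hk ↦ ?_
  have hmem (x : ℝ) (hx : x ∈ adicItv N n k) : x ∈ s ↔ k ∈ T := by
    rw [← (mem_adicItv_iff (adicItv_subset (Finset.mem_range.1 hk) hx).1).1 hx]
    rfl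
  by_cases hkT : k ∈ T
  · have hind (g : ℝ → ℝ) : ∫ x in adicItv N n k, s.indicator g x = ∫ x in adicItv N n k, g x :=
      setIntegral_congr_fun measurableSet_adicItv fun x hx ↦
        indicator_of_mem ((hmem x hx).2 hkT) g
    rw [hind, hind, setIntegral_adicItv_adicAvgAt (Finset.mem_range.1 hk)]
  · have hind (g : ℝ → ℝ) : ∫ x in adicItv N n k, s.indicator g x = 0 :=
      setIntegral_eq_zero_of_forall_eq_zero fun x hx ↦
        indicator_of_notMem (fun hxs ↦ hkT ((hmem x hx).1 hxs)) g
    rw [hind, hind]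

lemma measurable_max_zero_iSup_adicFiltration (hN : 1 < N) :
    Measurable[⨆ n, adicFiltration N n] fun x : ℝ ↦ max x 0 := by
  have hlim (x : ℝ) :
      Tendsto (fun n : ℕ ↦ (⌊x * (N : ℝ) ^ n⌋₊ : ℝ) / (N : ℝ) ^ n) atTop (𝓝 (max x 0)) := by
    have hpow : Tendsto (fun n : ℕ ↦ (N : ℝ) ^ n) atTop atTop :=
      tendsto_pow_atTop_atTop_of_one_lt (Nat.one_lt_cast.2 hN)
    refine ((tendsto_nat_floor_mul_div_atTop (le_max_right x 0)).comp hpow).congr fun n ↦ ?_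
    rcases le_total 0 x with hx | hx
    · rw [Function.comp_apply, max_eq_left hx]
    · rw [Function.comp_apply, max_eq_right hx, zero_mul, Nat.floor_zero,
        Nat.floor_of_nonpos (mul_nonpos_of_nonpos_of_nonneg hx (by positivity))]
  refine @measurable_of_tendsto_metrizable _ _ (⨆ n, adicFiltration N n) _ _ _ _ _ _
    (fun n ↦ ?_) (tendsto_pi_nhds.2 hlim)
  refine Measurable.div_const ?_ _
  exact ((measurable_from_top (f := fun k : ℕ ↦ (k : ℝ))).comp
    (measurable_floor_adicFiltration N n)).mono (le_iSup (adicFiltration N) n) le_rfl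

-- Lévy's upward theorem in place of the Lebesgue differentiation theorem.
lemma ae_tendsto_adicAvgAt (hN : 1 < N) (hφ : Integrable φ unitMeasure) (hφm : Measurable φ) :
    ∀ᵐ x ∂unitMeasure, Tendsto (fun n ↦ adicAvgAt N φ n x) atTop (𝓝 |φ x|) := by
  have hae : (fun x ↦ |φ (max x 0)|) =ᵐ[unitMeasure] fun x ↦ |φ x| :=
    ae_unitMeasure_of_forall fun x hx ↦ by simp only [max_eq_left hx.1]
  have hmeas : StronglyMeasurable[⨆ n, adicFiltration N n] fun x ↦ |φ (max x 0)| :=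
    ((measurable_norm.comp hφm).comp
      (measurable_max_zero_iSup_adicFiltration hN)).stronglyMeasurable
  have levy := (hφ.abs.congr hae.symm).tendsto_ae_condExp hmeas
  have hcond : ∀ᵐ x ∂unitMeasure, ∀ n,
      (unitMeasure[fun x ↦ |φ (max x 0)| | adicFiltration N n]) x = adicAvgAt N φ n x :=
    ae_all_iff.2 fun n ↦ (condExp_congr_ae hae).trans (condExp_adicFiltration hφ n)
  filter_upwards [levy, hcond, hae] with x hx hxn hx'
  simpa only [hxn, hx'] using hx

theorem isRegularMartingale_adicAvgAt (hN : 1 < N) (hφ : Integrable φ unitMeasure)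
    (hφm : Measurable φ) : IsRegularMartingale N (adicFiltration N) (fun x ↦ |φ x|)
      (adicAvgAt N φ) unitMeasure where
  stronglyMeasurable := stronglyMeasurable_adicAvgAt N φ
  condExp_ae_eq := condExp_adicFiltration hφ
  nonneg n _ := adicAvg_nonneg N φ n _
  succ_le_mul n := ae_unitMeasure_of_forall fun _ hx ↦ adicAvgAt_succ_le hφ n hx
  ae_tendsto := ae_tendsto_adicAvgAt hN hφ hφm

end AdicFiltration

section LowerBound

variable {N : ℕ} [NeZero N] {φ : ℝ → ℝ} {p u κ : ℝ} {E : Set ℝ}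

lemma setIntegral_adicMax_rpow_eq (hE : MeasurableSet E) (hEI : E ⊆ Ico 0 1) :
    ∫ x in E, adicMax N φ x ^ p = ∫ x in E, (⨆ n, adicAvgAt N φ n x) ^ p ∂unitMeasure := by
  rw [unitMeasure, Measure.restrict_restrict_of_subset hEI]
  exact setIntegral_congr_fun hE fun x hx ↦ by simp only [adicMax_eq_iSup φ (hEI hx)]

lemma setIntegral_adicMax_rpow_le (hu : 0 ≤ u) (hp : 0 ≤ p) (hκ : 0 ≤ κ)
    (hmax : Integrable (fun x ↦ max u (⨆ n, adicAvgAt N φ n x) ^ p) unitMeasure)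
    (hE : MeasurableSet E) (hEI : E ⊆ Ico 0 1) (hEκ : volume E = ENNReal.ofReal κ) :
    ∫ x in E, adicMax N φ x ^ p ≤
      κ * u ^ p + ∫ x, (max u (⨆ n, adicAvgAt N φ n x) ^ p - u ^ p) ∂unitMeasure := by
  have hκE : unitMeasure.real E = κ := by
    rw [unitMeasure, measureReal_restrict_apply hE, inter_eq_left.2 hEI, measureReal_def, hEκ,
      ENNReal.toReal_ofReal hκ]
  rw [setIntegral_adicMax_rpow_eq hE hEI, ← hκE]
  exact setIntegral_rpow_le (fun x ↦ Real.iSup_nonneg fun n ↦ adicAvg_nonneg N φ n _) hu hp hmax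

lemma supMeas_le (hu : 0 ≤ u) (hp : 0 ≤ p) (hκ : 0 ≤ κ)
    (hmax : Integrable (fun x ↦ max u (⨆ n, adicAvgAt N φ n x) ^ p) unitMeasure) :
    supMeas N p κ φ ≤
      κ * u ^ p + ∫ x, (max u (⨆ n, adicAvgAt N φ n x) ^ p - u ^ p) ∂unitMeasure := by
  refine Real.sSup_le ?_ ?_
  · rintro _ ⟨E, hE, hEI, hEκ, rfl⟩
    exact setIntegral_adicMax_rpow_le hu hp hκ hmax hE hEI hEκ
  · exact add_nonneg (by positivity) <| integral_nonneg fun x ↦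
      sub_nonneg.2 (Real.rpow_le_rpow hu (le_max_left _ _) hp)

lemma bddAbove_setIntegral_adicMax_rpow (hu : 0 ≤ u) (hp : 0 ≤ p) (hκ : 0 ≤ κ)
    (hmax : Integrable (fun x ↦ max u (⨆ n, adicAvgAt N φ n x) ^ p) unitMeasure) :
    BddAbove {z : ℝ | ∃ E : Set ℝ, MeasurableSet E ∧ E ⊆ Ico (0 : ℝ) 1 ∧
      volume E = ENNReal.ofReal κ ∧ z = ∫ x in E, adicMax N φ x ^ p} := by
  refine ⟨κ * u ^ p + ∫ x, (max u (⨆ n, adicAvgAt N φ n x) ^ p - u ^ p) ∂unitMeasure, ?_⟩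
  rintro _ ⟨E, hE, hEI, hEκ, rfl⟩
  exact setIntegral_adicMax_rpow_le hu hp hκ hmax hE hEI hEκ

theorem exists_sharp_le_supMeas (hN : 1 < N) (hp : 1 < p) (hφm : Measurable φ)
    (hφ₀ : ∀ x ∈ Ico (0 : ℝ) 1, 0 ≤ φ x) (hφ : Integrable φ unitMeasure)
    (hφp : Integrable (fun x ↦ φ x ^ p) unitMeasure) (hpos : 0 < ∫ x in Ico (0 : ℝ) 1, φ x)
    (hκ : κ ∈ Ioc (0 : ℝ) 1) :
    ∃ u ≥ ∫ x in Ico (0 : ℝ) 1, φ x, κ * u ≤ ∫ x in Ico (0 : ℝ) 1, φ x ∧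
      κ * u ^ p ≤ supMeas N p κ φ ∧
      κ * u ^ p + sharpConst N p * ((∫ x in Ico (0 : ℝ) 1, φ x ^ p) -
        u ^ (p - 1) * ∫ x in Ico (0 : ℝ) 1, φ x) ≤ supMeas N p κ φ := by
  have habs : (fun x ↦ |φ x|) =ᵐ[unitMeasure] φ :=
    ae_unitMeasure_of_forall fun x hx ↦ abs_of_nonneg (hφ₀ x hx)
  have habsp : (fun x ↦ |φ x| ^ p) =ᵐ[unitMeasure] fun x ↦ φ x ^ p :=
    habs.fun_comp (· ^ p)
  have hN' : (1 : ℝ) < N := Nat.one_lt_cast.2 hN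
  have hreg := isRegularMartingale_adicAvgAt hN hφ hφm
  have hX₀ : ∀ᵐ x ∂unitMeasure, adicAvgAt N φ 0 x = ∫ y, |φ y| ∂unitMeasure :=
    ae_unitMeasure_of_forall fun x hx ↦ adicAvgAt_zero N φ hx
  rw [← integral_congr_ae habs, ← integral_congr_ae habsp] at *
  have hmax := hreg.integrable_max_iSup_rpow hφ.abs (hφp.congr habsp.symm) (by linarith) hp hpos
    (hX₀.mono fun _ ↦ le_of_eq)
  obtain ⟨u, hfu, hκu, E, hE, hκE, hlow, hsharp⟩ :=
    hreg.exists_sharp_le_setIntegral hφ.abs (hφp.congr habsp.symm) hN' hp hX₀ hpos hκ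
  have hle : ∫ x in E, (⨆ n, adicAvgAt N φ n x) ^ p ∂unitMeasure ≤ supMeas N p κ φ := by
    have hEI : MeasurableSet (E ∩ Ico 0 1) := hE.inter measurableSet_Ico
    refine le_csSup (bddAbove_setIntegral_adicMax_rpow hpos.le (by linarith) hκ.1.le hmax)
      ⟨E ∩ Ico 0 1, hEI, inter_subset_right, ?_, ?_⟩
    · rw [← Measure.restrict_apply hE, ← hκE, ofReal_measureReal]
    · rw [setIntegral_adicMax_rpow_eq hEI inter_subset_right, unitMeasure,
        Measure.restrict_restrict hE, Measure.restrict_restrict hEI, inter_assoc, inter_self]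
  exact ⟨u, hfu, hκu, hlow.trans hle, hsharp.trans hle⟩

end LowerBound

/-- A bounded, nonnegative, measurable function: the class of test functions in which extremal
functions for the upper bound are built. -/
structure IsProfile (φ : ℝ → ℝ) : Prop where
  measurable : Measurable φ
  nonneg (x : ℝ) : 0 ≤ φ x
  exists_le : ∃ C, ∀ x, φ x ≤ C

/-- The maximal function truncated from below at `u`. -/
noncomputable def adicTruncMax (N : ℕ) (u : ℝ) (φ : ℝ → ℝ) (x : ℝ) : ℝ :=
  max u (⨆ n, adicAvgAt N φ n x)

/-- The function on `[0, 1)` whose restriction to the `i`-th first-level `N`-adic interval is a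
rescaled copy of `ψ i`. -/
noncomputable def adicGlue (N : ℕ) (ψ : ℕ → ℝ → ℝ) (x : ℝ) : ℝ :=
  ψ ⌊N * x⌋₊ (Int.fract (N * x))

lemma isProfile_const {c : ℝ} (hc : 0 ≤ c) : IsProfile fun _ ↦ c :=
  ⟨measurable_const, fun _ ↦ hc, c, fun _ ↦ le_rfl⟩

namespace IsProfile

variable {N : ℕ} [NeZero N] {φ φ' : ℝ → ℝ} {u c : ℝ}

lemma integrable (h : IsProfile φ) : Integrable φ unitMeasure :=
  let ⟨C, hC⟩ := h.exists_le
  .of_bound h.measurable.aestronglyMeasurable C <| ae_of_all _ fun x ↦ by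
    simpa only [Real.norm_of_nonneg (h.nonneg x)] using hC x

lemma rpow (h : IsProfile φ) {p : ℝ} (hp : 0 ≤ p) : IsProfile fun x ↦ φ x ^ p :=
  let ⟨C, hC⟩ := h.exists_le
  ⟨h.measurable.pow_const p, fun x ↦ Real.rpow_nonneg (h.nonneg x) p, C ^ p, fun x ↦
    Real.rpow_le_rpow (h.nonneg x) (hC x) hp⟩

lemma const_mul (h : IsProfile φ) (hc : 0 ≤ c) : IsProfile fun x ↦ c * φ x :=
  let ⟨C, hC⟩ := h.exists_le
  ⟨h.measurable.const_mul c, fun x ↦ mul_nonneg hc (h.nonneg x), c * C, fun x ↦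
    mul_le_mul_of_nonneg_left (hC x) hc⟩

lemma integral_abs (h : IsProfile φ) : ∫ x, |φ x| ∂unitMeasure = ∫ x, φ x ∂unitMeasure :=
  integral_congr_ae <| ae_of_all _ fun x ↦ abs_of_nonneg (h.nonneg x)

lemma integral_mem_Icc (h : IsProfile φ) {C : ℝ} (hC : ∀ x, φ x ≤ C) :
    ∫ x, φ x ∂unitMeasure ∈ Icc 0 C := by
  refine ⟨integral_nonneg h.nonneg, ?_⟩
  simpa using integral_mono h.integrable (integrable_const C) hC

lemma exists_adicAvgAt_le (h : IsProfile φ) : ∃ C, ∀ n x, adicAvgAt N φ n x ≤ C := by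
  obtain ⟨C, hC⟩ := h.exists_le
  refine ⟨C, fun n x ↦ ?_⟩
  have hfin : volume (adicItv N n ⌊x * (N : ℝ) ^ n⌋₊) < ⊤ := measure_Ico_lt_top
  have hle := norm_setIntegral_le_of_norm_le_const (f := fun y ↦ |φ y|) hfin fun y _ ↦ by
    simpa only [norm_abs_eq_norm, Real.norm_of_nonneg (h.nonneg y)] using hC y
  rw [adicAvgAt, adicAvg, ← le_div_iff₀' (natCast_pow_pos N n), div_eq_mul_inv]
  simpa only [volume_real_adicItv] using (le_abs_self _).trans hle

lemma adicTruncMax_le_iff (h : IsProfile φ) {x : ℝ} :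
    adicTruncMax N u φ x ≤ c ↔ u ≤ c ∧ ∀ n, adicAvgAt N φ n x ≤ c := by
  obtain ⟨C, hC⟩ := h.exists_adicAvgAt_le (N := N)
  rw [adicTruncMax, max_le_iff, ciSup_le_iff ⟨C, forall_mem_range.2 fun n ↦ hC n x⟩]

lemma adicTruncMax (h : IsProfile φ) (hu : 0 ≤ u) : IsProfile (adicTruncMax N u φ) where
  measurable := measurable_const.max <| .iSup fun n ↦
    ((stronglyMeasurable_adicAvgAt N φ n).mono ((adicFiltration N).le n)).measurable
  nonneg _ := hu.trans (le_max_left _ _)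
  exists_le := by
    obtain ⟨C, hC⟩ := h.exists_adicAvgAt_le (N := N)
    exact ⟨max u C, fun x ↦ h.adicTruncMax_le_iff.2
      ⟨le_max_left _ _, fun n ↦ (hC n x).trans (le_max_right _ _)⟩⟩

lemma ite_comp (hφ : IsProfile φ) (hφ' : IsProfile φ') {P : ℝ → Prop} [DecidablePred P]
    (hP : MeasurableSet {x | P x}) {s : ℝ → ℝ} (hs : Measurable s) :
    IsProfile fun x ↦ if P x then φ (s x) else φ' (s x) := by
  obtain ⟨C, hC⟩ := hφ.exists_le
  obtain ⟨C', hC'⟩ := hφ'.exists_le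
  refine ⟨.ite hP (hφ.measurable.comp hs) (hφ'.measurable.comp hs), fun x ↦ ?_,
    max C C', fun x ↦ ?_⟩
  · split_ifs
    exacts [hφ.nonneg _, hφ'.nonneg _]
  · split_ifs
    exacts [(hC _).trans (le_max_left _ _), (hC' _).trans (le_max_right _ _)]

end IsProfile

section Glue

variable {N : ℕ} [NeZero N] {ψ : ℕ → ℝ → ℝ} {g : ℝ → ℝ} {u x : ℝ} {n k : ℕ}

lemma fract_natCast_mul_eq_sub (N : ℕ) (hx : 0 ≤ x) : Int.fract (N * x) = N * x - ⌊N * x⌋₊ := by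
  rw [Int.fract, natCast_floor_eq_intCast_floor (by positivity)]

lemma floor_natCast_mul_lt (hx : x ∈ Ico (0 : ℝ) 1) : ⌊N * x⌋₊ < N := by
  simpa only [pow_one, mul_comm] using floor_mul_pow_lt (N := N) hx 1

lemma floor_mul_pow_succ (N : ℕ) (hx : 0 ≤ x) (n : ℕ) :
    ⌊x * (N : ℝ) ^ (n + 1)⌋₊ = ⌊Int.fract (N * x) * (N : ℝ) ^ n⌋₊ + ⌊N * x⌋₊ * N ^ n := by
  have := Int.fract_nonneg (N * x)
  rw [← Nat.floor_add_natCast (by positivity), fract_natCast_mul_eq_sub N hx]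
  congr 1
  push_cast
  ring

lemma adicItv_succ_eq (n k i : ℕ) : adicItv N (n + 1) (k + i * N ^ n) =
    Ico (((k : ℝ) / (N : ℝ) ^ n + i) / N) ((((k : ℝ) + 1) / (N : ℝ) ^ n + i) / N) := by
  have hN : (N : ℝ) ≠ 0 := NeZero.ne _
  rw [adicItv]
  congr 1 <;> push_cast <;> field_simp <;> ring

lemma adicGlue_of_mem_adicItv_succ (ψ : ℕ → ℝ → ℝ) {i : ℕ} (hk : k < N ^ n)
    (hx : x ∈ adicItv N (n + 1) (k + i * N ^ n)) : adicGlue N ψ x = ψ i (N * x - i) := by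
  have hN : (0 : ℝ) < N := Nat.cast_pos.2 (NeZero.pos N)
  rw [adicItv_succ_eq, mem_Ico, div_le_iff₀' hN, lt_div_iff₀' hN] at hx
  have hchild : N * x - i ∈ Ico (0 : ℝ) 1 :=
    adicItv_subset hk ⟨by linarith only [hx.1], by linarith only [hx.2]⟩
  have hNx : 0 ≤ N * x := by linarith only [hchild.1, (Nat.cast_nonneg i : (0 : ℝ) ≤ i)]
  have hfloor : ⌊N * x⌋₊ = i :=
    (Nat.floor_eq_iff hNx).2 ⟨by linarith only [hchild.1], by linarith only [hchild.2]⟩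
  rw [adicGlue, fract_natCast_mul_eq_sub N (nonneg_of_mul_nonneg_right hNx hN), hfloor]

lemma setIntegral_adicItv_adicGlue (ψ : ℕ → ℝ → ℝ) (i : ℕ) (hk : k < N ^ n) :
    ∫ y in adicItv N (n + 1) (k + i * N ^ n), adicGlue N ψ y =
      (N : ℝ)⁻¹ * ∫ y in adicItv N n k, ψ i y := by
  have hN : (0 : ℝ) < N := Nat.cast_pos.2 (NeZero.pos N)
  have hle : (k : ℝ) / (N : ℝ) ^ n ≤ (k + 1) / (N : ℝ) ^ n := by gcongr; linarith
  rw [setIntegral_congr_fun measurableSet_adicItv fun y hy ↦ adicGlue_of_mem_adicItv_succ ψ hk hy,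
    adicItv_succ_eq, adicItv, integral_Ico_eq_integral_Ioc, integral_Ico_eq_integral_Ioc,
    ← intervalIntegral.integral_of_le (by gcongr), ← intervalIntegral.integral_of_le hle,
    intervalIntegral.integral_comp_mul_sub (ψ i) hN.ne', smul_eq_mul]
  congr 2 <;> field_simp <;> ring

lemma integral_of_eqOn_adicGlue (hg : Integrable g unitMeasure)
    (hgψ : EqOn g (adicGlue N ψ) (Ico 0 1)) :
    ∫ x, g x ∂unitMeasure = (N : ℝ)⁻¹ * ∑ i ∈ Finset.range N, ∫ x, ψ i x ∂unitMeasure := by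
  rw [integral_unitMeasure_eq_sum (N := N) hg 1, pow_one, Finset.mul_sum]
  refine Finset.sum_congr rfl fun i hi ↦ ?_
  have hsub : adicItv N 1 i ⊆ Ico 0 1 := adicItv_subset (by simpa using hi)
  rw [setIntegral_congr_fun measurableSet_adicItv (hgψ.mono hsub)]
  simpa [adicItv] using setIntegral_adicItv_adicGlue (n := 0) (k := 0) ψ i (by simp)

lemma adicAvgAt_succ_of_eqOn_adicGlue (hgψ : EqOn g (adicGlue N ψ) (Ico 0 1))
    (hx : x ∈ Ico (0 : ℝ) 1) (n : ℕ) :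
    adicAvgAt N g (n + 1) x = adicAvgAt N (ψ ⌊N * x⌋₊) n (Int.fract (N * x)) := by
  have hN : (N : ℝ) ≠ 0 := NeZero.ne _
  have hfract : Int.fract (N * x) ∈ Ico (0 : ℝ) 1 := ⟨Int.fract_nonneg _, Int.fract_lt_one _⟩
  have habs : EqOn (fun y ↦ |g y|) (adicGlue N fun i y ↦ |ψ i y|)
      (adicItv N (n + 1) ⌊x * (N : ℝ) ^ (n + 1)⌋₊) := fun y hy ↦
    congrArg abs (hgψ (adicItv_subset (floor_mul_pow_lt hx (n + 1)) hy))
  rw [adicAvgAt, adicAvg, setIntegral_congr_fun measurableSet_adicItv habs,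
    floor_mul_pow_succ N hx.1, setIntegral_adicItv_adicGlue _ _ (floor_mul_pow_lt hfract n),
    adicAvgAt, adicAvg, pow_succ, mul_assoc, mul_inv_cancel_left₀ hN]

theorem adicTruncMax_of_eqOn_adicGlue (hg : IsProfile g) (hgψ : EqOn g (adicGlue N ψ) (Ico 0 1))
    (hψ : ∀ i, IsProfile (ψ i)) (hu : ∫ x, g x ∂unitMeasure ≤ u) (hx : x ∈ Ico (0 : ℝ) 1) :
    adicTruncMax N u g x = adicTruncMax N u (ψ ⌊N * x⌋₊) (Int.fract (N * x)) := by
  refine eq_of_forall_ge_iff fun c ↦ ?_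
  rw [hg.adicTruncMax_le_iff, (hψ _).adicTruncMax_le_iff, ← Nat.and_forall_add_one,
    adicAvgAt_zero N g hx, hg.integral_abs]
  simp only [adicAvgAt_succ_of_eqOn_adicGlue hgψ hx]
  exact ⟨fun h ↦ ⟨h.1, h.2.2⟩, fun h ↦ ⟨h.1, hu.trans h.1, h.2⟩⟩

end Glue

/-- The number of leading digits `N - 1` in the `N`-adic expansion of `x ∈ [0, 1)`, that is the
`n` with `N⁻¹ < N ^ n * (1 - x) ≤ 1`. -/
noncomputable def leadingLevel (N : ℕ) (x : ℝ) : ℕ :=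
  ⌊-Real.logb N (1 - x)⌋₊

/-- The point of `[0, 1)` whose `N`-adic expansion is that of `x` without its leading digits
`N - 1`. -/
noncomputable def leadingTail (N : ℕ) (x : ℝ) : ℝ :=
  1 - N ^ leadingLevel N x * (1 - x)

/-- A function on `[0, 1)` made of rescaled copies of `φ` and `φ'`, on `N`-adic intervals of total
measures `θ` and `1 - θ`, where `θ = ∑ n, d n / N ^ (n + 1)`: of the first `N - 1` children of
`[1 - N⁻ⁿ, 1)`, the first `d n` carry `φ` and the others `φ'`. -/
noncomputable def adicMix {N : ℕ} (d : ℕ → Fin N) (φ φ' : ℝ → ℝ) (x : ℝ) : ℝ :=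
  if ⌊N * leadingTail N x⌋₊ < d (leadingLevel N x) then φ (Int.fract (N * leadingTail N x))
  else φ' (Int.fract (N * leadingTail N x))

/-- The restrictions of `adicMix d φ φ'` to the `N` children of `[0, 1)`, rescaled to `[0, 1)`. -/
noncomputable def adicMixChild {N : ℕ} (d : ℕ → Fin N) (φ φ' : ℝ → ℝ) (i : ℕ) : ℝ → ℝ :=
  if i + 1 = N then adicMix (fun n ↦ d (n + 1)) φ φ' else if i < d 0 then φ else φ'

section Mix

variable {N : ℕ} {φ φ' : ℝ → ℝ} {u x : ℝ}

lemma leadingLevel_eq_zero (hN : 1 < N) (hx : x ∈ Ico (0 : ℝ) 1) (h : ⌊N * x⌋₊ + 1 < N) :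
    leadingLevel N x = 0 := by
  have hN₀ : (0 : ℝ) < N := Nat.cast_pos.2 (by omega)
  have hfloor : (⌊N * x⌋₊ : ℝ) + 2 ≤ N := by exact_mod_cast h
  have hlt : (N : ℝ)⁻¹ < 1 - x := by
    rw [inv_lt_iff_one_lt_mul₀' hN₀]
    linarith [Nat.lt_floor_add_one (N * x)]
  refine Nat.floor_eq_zero.2 (neg_lt.1 ?_)
  rwa [Real.lt_logb_iff_rpow_lt (Nat.one_lt_cast.2 hN) (sub_pos.2 hx.2), Real.rpow_neg_one]

lemma one_sub_fract_natCast_mul (hx : x ∈ Ico (0 : ℝ) 1) (h : ⌊N * x⌋₊ + 1 = N) :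
    1 - Int.fract (N * x) = N * (1 - x) := by
  have hfloor : (⌊N * x⌋₊ : ℝ) + 1 = N := by exact_mod_cast h
  rw [fract_natCast_mul_eq_sub N hx.1]
  linarith

lemma leadingLevel_eq_succ (hN : 1 < N) (hx : x ∈ Ico (0 : ℝ) 1) (h : ⌊N * x⌋₊ + 1 = N) :
    leadingLevel N x = leadingLevel N (Int.fract (N * x)) + 1 := by
  have hN₁ : (1 : ℝ) < N := Nat.one_lt_cast.2 hN
  have hnonpos : Real.logb N (1 - Int.fract (N * x)) ≤ 0 :=
    Real.logb_nonpos hN₁ (sub_nonneg.2 (Int.fract_lt_one _).le)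
      (sub_le_self _ (Int.fract_nonneg _))
  have hlogb : Real.logb N (1 - Int.fract (N * x)) = 1 + Real.logb N (1 - x) := by
    rw [one_sub_fract_natCast_mul hx h, Real.logb_mul (by positivity) (sub_pos.2 hx.2).ne',
      Real.logb_self_eq_one hN₁]
  rw [leadingLevel, leadingLevel, ← Nat.floor_add_one (neg_nonneg.2 hnonpos), hlogb]
  congr 1
  ring

lemma leadingTail_fract (hN : 1 < N) (hx : x ∈ Ico (0 : ℝ) 1) (h : ⌊N * x⌋₊ + 1 = N) :
    leadingTail N (Int.fract (N * x)) = leadingTail N x := by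
  rw [leadingTail, leadingTail, leadingLevel_eq_succ hN hx h, one_sub_fract_natCast_mul hx h,
    pow_succ, mul_assoc]

lemma apply_adicMix (h : ℝ → ℝ) (d : ℕ → Fin N) (φ φ' : ℝ → ℝ) (x : ℝ) :
    h (adicMix d φ φ' x) = adicMix d (fun y ↦ h (φ y)) (fun y ↦ h (φ' y)) x :=
  apply_ite h _ _ _

lemma IsProfile.adicMix (hφ : IsProfile φ) (hφ' : IsProfile φ') (d : ℕ → Fin N) :
    IsProfile (adicMix d φ φ') := by
  have hlevel : Measurable (leadingLevel N) :=
    Nat.measurable_floor.comp ((Real.measurable_log.comp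
      (measurable_id.const_sub 1)).div_const _).neg
  have htail : Measurable fun x ↦ N * leadingTail N x :=
    (((measurable_const.pow hlevel).mul (measurable_id.const_sub 1)).const_sub 1).const_mul _
  exact hφ.ite_comp hφ' (measurableSet_lt (Nat.measurable_floor.comp htail)
    ((measurable_from_top (f := fun n ↦ (d n : ℕ))).comp hlevel)) (measurable_fract.comp htail)

lemma IsProfile.adicMixChild (hφ : IsProfile φ) (hφ' : IsProfile φ') (d : ℕ → Fin N) (i : ℕ) :
    IsProfile (adicMixChild d φ φ' i) := by
  rw [_root_.adicMixChild]
  split_ifs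
  exacts [hφ.adicMix hφ' _, hφ, hφ']

lemma adicMix_le {C : ℝ} (hφ : ∀ x, φ x ≤ C) (hφ' : ∀ x, φ' x ≤ C) (d : ℕ → Fin N) (x : ℝ) :
    adicMix d φ φ' x ≤ C := by
  rw [adicMix]
  split_ifs
  exacts [hφ _, hφ' _]

variable [NeZero N]

lemma adicMix_eqOn_adicGlue (hN : 1 < N) (d : ℕ → Fin N) (φ φ' : ℝ → ℝ) :
    EqOn (adicMix d φ φ') (adicGlue N (adicMixChild d φ φ')) (Ico 0 1) := by
  intro x hx
  have hlt : ⌊N * x⌋₊ < N := floor_natCast_mul_lt hx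
  by_cases h : ⌊N * x⌋₊ + 1 = N
  · rw [adicGlue, adicMixChild, if_pos h, adicMix, adicMix, leadingTail_fract hN hx h,
      leadingLevel_eq_succ hN hx h]
  · have hlevel := leadingLevel_eq_zero hN hx (by omega)
    have htail : leadingTail N x = x := by rw [leadingTail, hlevel]; ring
    rw [adicGlue, adicMixChild, if_neg h, adicMix, htail, hlevel]
    split_ifs <;> rfl

lemma sum_range_ite_lt {m n : ℕ} (hmn : m ≤ n) (a b : ℝ) :
    ∑ i ∈ Finset.range n, (if i < m then a else b) = m * a + (n - m) * b := by
  induction n, hmn using Nat.le_induction with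
  | base =>
    rw [Finset.sum_congr rfl fun i hi ↦ if_pos (Finset.mem_range.1 hi)]
    simp
  | succ n hmn ih =>
    rw [Finset.sum_range_succ, ih, if_neg hmn.not_gt]
    push_cast
    ring

lemma natCast_mul_ofDigits (d : ℕ → Fin N) :
    N * Real.ofDigits d = (d 0 : ℕ) + Real.ofDigits fun n ↦ d (n + 1) := by
  have hN : (N : ℝ) ≠ 0 := NeZero.ne _
  rw [Real.ofDigits_eq_sum_add_ofDigits d 1, Finset.sum_range_one, Real.ofDigitsTerm]
  field_simp
  ring

lemma natCast_mul_integral_adicMix (hN : 1 < N) (hφ : IsProfile φ) (hφ' : IsProfile φ')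
    (d : ℕ → Fin N) :
    N * ∫ x, adicMix d φ φ' x ∂unitMeasure =
      (d 0 : ℕ) * ∫ x, φ x ∂unitMeasure + (N - 1 - (d 0 : ℕ)) * ∫ x, φ' x ∂unitMeasure +
        ∫ x, adicMix (fun n ↦ d (n + 1)) φ φ' x ∂unitMeasure := by
  obtain ⟨M, rfl⟩ := Nat.exists_eq_add_one.2 (NeZero.pos N)
  have hchild (i : ℕ) (hi : i ∈ Finset.range M) :
      ∫ x, adicMixChild d φ φ' i x ∂unitMeasure =
        if i < d 0 then ∫ x, φ x ∂unitMeasure else ∫ x, φ' x ∂unitMeasure := by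
    rw [adicMixChild, if_neg (by simpa using (Finset.mem_range.1 hi).ne)]
    split_ifs <;> rfl
  rw [integral_of_eqOn_adicGlue (hφ.adicMix hφ' d).integrable (adicMix_eqOn_adicGlue hN d φ φ'),
    mul_inv_cancel_left₀ (NeZero.ne _), Finset.sum_range_succ, Finset.sum_congr rfl hchild,
    sum_range_ite_lt (Nat.lt_succ_iff.1 (d 0).2), adicMixChild, if_pos rfl]
  push_cast
  ring

lemma eq_zero_of_mul_eq_comp {α : Type*} {r C : ℝ} (hr : 1 < r) {e : α → ℝ} {s : α → α}
    (hs : ∀ a, r * e a = e (s a)) (hC : ∀ a, |e a| ≤ C) (a : α) : e a = 0 := by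
  have hiter (n : ℕ) : r ^ n * e a = e (s^[n] a) := by
    induction n with
    | zero => simp
    | succ n ih => rw [pow_succ', mul_assoc, ih, hs, Function.iterate_succ_apply']
  by_contra hea
  obtain ⟨n, hn⟩ := pow_unbounded_of_one_lt (C / |e a|) hr
  rw [div_lt_iff₀ (abs_pos.2 hea), ← abs_of_pos (pow_pos (zero_lt_one.trans hr) n), ← abs_mul,
    hiter] at hn
  exact hn.not_ge (hC _)

theorem integral_adicMix (hN : 1 < N) (hφ : IsProfile φ) (hφ' : IsProfile φ') (d : ℕ → Fin N) :
    ∫ x, adicMix d φ φ' x ∂unitMeasure =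
      Real.ofDigits d * ∫ x, φ x ∂unitMeasure +
        (1 - Real.ofDigits d) * ∫ x, φ' x ∂unitMeasure := by
  obtain ⟨C, hC⟩ := hφ.exists_le
  obtain ⟨C', hC'⟩ := hφ'.exists_le
  replace hC (x : ℝ) : φ x ≤ max C C' := (hC x).trans (le_max_left _ _)
  replace hC' (x : ℝ) : φ' x ≤ max C C' := (hC' x).trans (le_max_right _ _)
  set a := ∫ x, φ x ∂unitMeasure
  set b := ∫ x, φ' x ∂unitMeasure
  set e : (ℕ → Fin N) → ℝ := fun d ↦ ∫ x, adicMix d φ φ' x ∂unitMeasure -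
    (Real.ofDigits d * a + (1 - Real.ofDigits d) * b)
  have hshift (d : ℕ → Fin N) : N * e d = e fun n ↦ d (n + 1) := by
    linear_combination natCast_mul_integral_adicMix hN hφ hφ' d - (a - b) * natCast_mul_ofDigits d
  have hbound (d : ℕ → Fin N) : |e d| ≤ max C C' := by
    have hmix := (hφ.adicMix hφ' d).integral_mem_Icc (adicMix_le hC hC' d)
    have hcomb := convex_Icc 0 (max C C') (hφ.integral_mem_Icc hC) (hφ'.integral_mem_Icc hC')
      (Real.ofDigits_nonneg d) (sub_nonneg.2 (Real.ofDigits_le_one d)) (add_sub_cancel _ _)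
    exact abs_sub_le_of_nonneg_of_le hmix.1 hmix.2 hcomb.1 hcomb.2
  exact sub_eq_zero.1 (eq_zero_of_mul_eq_comp (Nat.one_lt_cast.2 hN) hshift hbound d)

theorem adicTruncMax_adicMix (hN : 1 < N) (hφ : IsProfile φ) (hφ' : IsProfile φ')
    (d : ℕ → Fin N) (hu : ∀ n, ∫ x, adicMix (fun k ↦ d (k + n)) φ φ' x ∂unitMeasure ≤ u)
    (hx : x ∈ Ico (0 : ℝ) 1) :
    adicTruncMax N u (adicMix d φ φ') x =
      adicMix d (adicTruncMax N u φ) (adicTruncMax N u φ') x := by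
  induction hn : leadingLevel N x using Nat.strong_induction_on generalizing x d with
  | _ n ih =>
  rw [adicTruncMax_of_eqOn_adicGlue (hφ.adicMix hφ' d) (adicMix_eqOn_adicGlue hN d φ φ')
    (hφ.adicMixChild hφ' d) (hu 0) hx, adicMix_eqOn_adicGlue hN d _ _ hx, adicGlue, adicMixChild,
    adicMixChild]
  split_ifs with hlast
  · refine ih _ ?_ _ (fun n ↦ hu (n + 1)) ⟨Int.fract_nonneg _, Int.fract_lt_one _⟩ rfl
    rw [← hn, leadingLevel_eq_succ hN hx hlast]
    exact Nat.lt_succ_self _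
  · rfl
  · rfl

lemma integral_adicMix_rpow (hN : 1 < N) (hφ : IsProfile φ) (hφ' : IsProfile φ') (d : ℕ → Fin N)
    {p : ℝ} (hp : 0 ≤ p) :
    ∫ x, adicMix d φ φ' x ^ p ∂unitMeasure =
      Real.ofDigits d * ∫ x, φ x ^ p ∂unitMeasure +
        (1 - Real.ofDigits d) * ∫ x, φ' x ^ p ∂unitMeasure := by
  rw [← integral_adicMix hN (hφ.rpow hp) (hφ'.rpow hp)]
  exact integral_congr_ae (ae_of_all _ (apply_adicMix (· ^ p) d φ φ'))

theorem integral_adicTruncMax_adicMix_rpow (hN : 1 < N) (hφ : IsProfile φ) (hφ' : IsProfile φ')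
    (d : ℕ → Fin N) (hu₀ : 0 ≤ u)
    (hu : ∀ n, ∫ x, adicMix (fun k ↦ d (k + n)) φ φ' x ∂unitMeasure ≤ u) {p : ℝ} (hp : 0 ≤ p) :
    ∫ x, adicTruncMax N u (adicMix d φ φ') x ^ p ∂unitMeasure =
      Real.ofDigits d * ∫ x, adicTruncMax N u φ x ^ p ∂unitMeasure +
        (1 - Real.ofDigits d) * ∫ x, adicTruncMax N u φ' x ^ p ∂unitMeasure := by
  rw [← integral_adicMix_rpow hN (hφ.adicTruncMax hu₀) (hφ'.adicTruncMax hu₀) d hp]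
  exact integral_congr_ae <| ae_unitMeasure_of_forall fun x hx ↦ by
    simp only [adicTruncMax_adicMix hN hφ hφ' d hu hx]

end Mix

lemma adicAvg_const_mul (N : ℕ) (c : ℝ) (φ : ℝ → ℝ) (m k : ℕ) :
    adicAvg N (fun x ↦ c * φ x) m k = |c| * adicAvg N φ m k := by
  simp only [adicAvg, abs_mul, integral_const_mul, mul_left_comm]

lemma adicAvg_const (N : ℕ) [NeZero N] (c : ℝ) (m k : ℕ) : adicAvg N (fun _ ↦ c) m k = |c| := by
  rw [adicAvg, setIntegral_const, volume_real_adicItv, smul_eq_mul,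
    mul_inv_cancel_left₀ (natCast_pow_pos N m).ne']

lemma adicTruncMax_const (N : ℕ) [NeZero N] {u c : ℝ} (hc : 0 ≤ c) (hcu : c ≤ u) (x : ℝ) :
    adicTruncMax N u (fun _ ↦ c) x = u := by
  simp only [adicTruncMax, adicAvgAt, adicAvg_const, abs_of_nonneg hc, ciSup_const,
    max_eq_left hcu]

lemma adicTruncMax_natCast_mul {N : ℕ} [NeZero N] {φ : ℝ → ℝ} (hφ : IsProfile φ) {x : ℝ}
    (hx : x ∈ Ico (0 : ℝ) 1) :
    adicTruncMax N (∫ y, φ y ∂unitMeasure) (fun y ↦ N * φ y) x =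
      N * adicTruncMax N (∫ y, φ y ∂unitMeasure) φ x := by
  have hN : (0 : ℝ) < N := Nat.cast_pos.2 (NeZero.pos N)
  have hN₁ : (1 : ℝ) ≤ N := Nat.one_le_cast.2 (NeZero.pos N)
  have hmean : adicAvgAt N φ 0 x = ∫ y, φ y ∂unitMeasure := by
    rw [adicAvgAt_zero N φ hx, hφ.integral_abs]
  have hmul (n : ℕ) : adicAvgAt N (fun y ↦ N * φ y) n x = N * adicAvgAt N φ n x := by
    rw [adicAvgAt, adicAvg_const_mul, Nat.abs_cast, adicAvgAt]
  refine eq_of_forall_ge_iff fun c ↦ ?_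
  rw [(hφ.const_mul hN.le).adicTruncMax_le_iff, ← le_div_iff₀' hN, hφ.adicTruncMax_le_iff]
  simp only [hmul, le_div_iff₀' hN]
  refine ⟨fun h ↦ ⟨hmean ▸ h.2 0, h.2⟩, fun h ↦ ⟨?_, h.2⟩⟩
  exact (le_mul_of_one_le_left (integral_nonneg hφ.nonneg) hN₁).trans h.1

lemma integral_adicTruncMax_natCast_mul_rpow {N : ℕ} [NeZero N] {φ : ℝ → ℝ} (hφ : IsProfile φ)
    (p : ℝ) :
    ∫ x, adicTruncMax N (∫ y, φ y ∂unitMeasure) (fun y ↦ N * φ y) x ^ p ∂unitMeasure =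
      N ^ p * ∫ x, adicTruncMax N (∫ y, φ y ∂unitMeasure) φ x ^ p ∂unitMeasure := by
  rw [← integral_const_mul]
  exact integral_congr_ae <| ae_unitMeasure_of_forall fun x hx ↦ by
    simp only [adicTruncMax_natCast_mul hφ hx, Real.mul_rpow (Nat.cast_nonneg N)
      ((hφ.adicTruncMax (integral_nonneg hφ.nonneg)).nonneg x)]

lemma exists_ofDigits_eq_inv {N : ℕ} [NeZero N] (hN : 1 < N) :
    ∃ d : ℕ → Fin N, Real.ofDigits d = (N : ℝ)⁻¹ ∧
      ∀ n, Real.ofDigits (fun k ↦ d (k + (n + 1))) = 0 := by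
  have hshift (n : ℕ) : Real.ofDigits (fun k ↦ (Pi.single 0 1 : ℕ → Fin N) (k + (n + 1))) = 0 := by
    simp [Real.ofDigits, Real.ofDigitsTerm]
  have hone : ((1 : Fin N) : ℕ) = 1 := Nat.mod_eq_of_lt hN
  refine ⟨Pi.single 0 1, eq_inv_of_mul_eq_one_right ?_, hshift⟩
  rw [natCast_mul_ofDigits, hshift 0, Pi.single_eq_same, hone, Nat.cast_one, add_zero]

/-- `HasSharpProfile N p u x A` says that some profile with mean `x` and `p`-th moment `A` attains
equality in the sharp lower bound for the `p`-th moment of the maximal function truncated at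
`u`. -/
def HasSharpProfile (N : ℕ) (p u x A : ℝ) : Prop :=
  ∃ φ, IsProfile φ ∧ ∫ y, φ y ∂unitMeasure = x ∧ ∫ y, φ y ^ p ∂unitMeasure = A ∧
    ∫ y, adicTruncMax N u φ y ^ p ∂unitMeasure = u ^ p + sharpConst N p * (A - u ^ (p - 1) * x)

namespace HasSharpProfile

variable {N : ℕ} [NeZero N] {p u x x' A A' a b : ℝ}

lemma const (N : ℕ) [NeZero N] {c : ℝ} (hc : 0 ≤ c) (hcu : c ≤ u)
    (hcp : c ^ p = u ^ (p - 1) * c) : HasSharpProfile N p u c (c ^ p) :=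
  ⟨fun _ ↦ c, isProfile_const hc, by simp, by simp, by
    simp [adicTruncMax_const N hc hcu, hcp]⟩

lemma mix (hN : 1 < N) (hp : 0 ≤ p) (hu : 0 ≤ u) (h : HasSharpProfile N p u x A)
    (h' : HasSharpProfile N p u x' A') (hx : x ≤ u) (hx' : x' ≤ u) (ha : 0 ≤ a) (hb : 0 ≤ b)
    (hab : a + b = 1) : HasSharpProfile N p u (a * x + b * x') (a * A + b * A') := by
  obtain ⟨φ, hφ, rfl, rfl, hM⟩ := h
  obtain ⟨φ', hφ', rfl, rfl, hM'⟩ := h'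
  obtain ⟨d, -, rfl⟩ := Real.ofDigits_SurjOn hN (⟨ha, by linarith⟩ : a ∈ Icc (0 : ℝ) 1)
  obtain rfl : b = 1 - Real.ofDigits d := by linarith
  have hmean (d : ℕ → Fin N) : ∫ x, adicMix d φ φ' x ∂unitMeasure ≤ u := by
    rw [integral_adicMix hN hφ hφ' d]
    exact convex_Iic u hx hx' (Real.ofDigits_nonneg d)
      (sub_nonneg.2 (Real.ofDigits_le_one d)) (add_sub_cancel _ _)
  refine ⟨adicMix d φ φ', hφ.adicMix hφ' d, integral_adicMix hN hφ hφ' d,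
    integral_adicMix_rpow hN hφ hφ' d hp, ?_⟩
  rw [integral_adicTruncMax_adicMix_rpow hN hφ hφ' d hu (fun n ↦ hmean _) hp, hM, hM']
  ring

lemma natCast_rpow_mul (hN : 1 < N) (hp : 1 < p) (hu : 0 ≤ u) (h : HasSharpProfile N p u u A) :
    HasSharpProfile N p u u (N ^ (p - 1) * A) := by
  obtain ⟨φ, hφ, rfl, rfl, hM⟩ := h
  have hN₀ : (0 : ℝ) < N := Nat.cast_pos.2 (NeZero.pos N)
  have hp₀ : 0 < p := by linarith
  have hrpow : (N : ℝ)⁻¹ * N ^ p = N ^ (p - 1) := by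
    rw [Real.rpow_sub_one hN₀.ne', inv_mul_eq_div]
  have hNφ : IsProfile fun y ↦ N * φ y := hφ.const_mul hN₀.le
  have hzero : IsProfile fun _ ↦ 0 := isProfile_const le_rfl
  obtain ⟨d, hd, hshift⟩ := exists_ofDigits_eq_inv hN
  have hmean : ∫ y, adicMix d (fun y ↦ N * φ y) (fun _ ↦ 0) y ∂unitMeasure =
      ∫ y, φ y ∂unitMeasure := by
    rw [integral_adicMix hN hNφ hzero, integral_const_mul, integral_zero, mul_zero, add_zero,
      hd, inv_mul_cancel_left₀ hN₀.ne']
  have hmean_shift (n : ℕ) : ∫ y, adicMix (fun k ↦ d (k + n)) (fun y ↦ N * φ y) (fun _ ↦ 0) y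
      ∂unitMeasure ≤ ∫ y, φ y ∂unitMeasure := by
    rcases n with - | n
    · exact hmean.le
    · rw [integral_adicMix hN hNφ hzero, hshift, integral_zero]
      simpa using hu
  refine ⟨adicMix d (fun y ↦ N * φ y) fun _ ↦ 0, hNφ.adicMix hzero d, hmean, ?_, ?_⟩
  · simp only [integral_adicMix_rpow hN hNφ hzero d hp₀.le, Real.mul_rpow hN₀.le (hφ.nonneg _),
      integral_const_mul, Real.zero_rpow hp₀.ne', integral_zero, mul_zero, add_zero,
      hd, ← hrpow, mul_assoc]
  · have hsharp := sharpConst_mul_rpow_sub (Nat.one_lt_cast.2 hN) hp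
    rw [integral_adicTruncMax_adicMix_rpow hN hNφ hzero d hu hmean_shift hp₀.le,
      integral_adicTruncMax_natCast_mul_rpow hφ, hM,
      hd, rpow_sub_one_mul_self hu hp, ← hrpow]
    simp only [adicTruncMax_const N le_rfl hu, integral_const, probReal_univ, one_smul]
    field_simp
    linear_combination (∫ y, φ y ∂unitMeasure) ^ p * -hsharp

lemma natCast_rpow_pow_mul (hN : 1 < N) (hp : 1 < p) (hu : 0 ≤ u) (k : ℕ) :
    HasSharpProfile N p u u (((N : ℝ) ^ (p - 1)) ^ k * u ^ p) := by
  induction k with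
  | zero => simpa using const N hu le_rfl (rpow_sub_one_mul_self hu hp).symm
  | succ k ih => simpa only [pow_succ', mul_assoc] using ih.natCast_rpow_mul hN hp hu

lemma of_rpow_le (hN : 1 < N) (hp : 1 < p) (hu : 0 < u) (hA : u ^ p ≤ A) :
    HasSharpProfile N p u u A := by
  have hr : 1 < (N : ℝ) ^ (p - 1) :=
    Real.one_lt_rpow (Nat.one_lt_cast.2 hN) (sub_pos.2 hp)
  obtain ⟨k, hk⟩ := pow_unbounded_of_one_lt (A / u ^ p) hr
  rw [div_lt_iff₀ (Real.rpow_pos_of_pos hu p)] at hk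
  obtain ⟨a, b, ha, hb, hab, rfl⟩ := Icc_subset_segment ⟨hA, hk.le⟩
  have hmix := (const N hu.le le_rfl (rpow_sub_one_mul_self hu.le hp).symm).mix hN
    (by linarith) hu.le (natCast_rpow_pow_mul hN hp hu.le k) le_rfl le_rfl ha hb hab
  rwa [← add_mul, hab, one_mul] at hmix

lemma of_rpow_sub_one_mul_le (hN : 1 < N) (hp : 1 < p) (hx : 0 < x) (hxu : x ≤ u)
    (hA : u ^ (p - 1) * x ≤ A) : HasSharpProfile N p u x A := by
  have hu : 0 < u := hx.trans_le hxu
  have hp₀ : p ≠ 0 := by linarith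
  have hAu : u ^ p ≤ A * u / x := by
    rw [le_div_iff₀ hx, ← rpow_sub_one_mul_self hu.le hp, mul_right_comm]
    exact mul_le_mul_of_nonneg_right hA hu.le
  have hmix := (of_rpow_le hN hp hu hAu).mix hN (by linarith) hu.le
    (const N le_rfl hu.le (by simp [Real.zero_rpow hp₀])) le_rfl hu.le
    (div_nonneg hx.le hu.le) (sub_nonneg.2 (div_le_one_of_le₀ hxu hu.le)) (add_sub_cancel _ _)
  have hmoment : x / u * (A * u / x) = A := by field_simp
  rwa [Real.zero_rpow hp₀, mul_zero, add_zero, div_mul_cancel₀ _ hu.ne', hmoment, add_zero] at hmix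

end HasSharpProfile

section Bellman

variable {N : ℕ} [NeZero N] {φ : ℝ → ℝ} {p f F κ u : ℝ}

lemma supMeas_nonneg (N : ℕ) (p κ : ℝ) (φ : ℝ → ℝ) : 0 ≤ supMeas N p κ φ := by
  refine Real.sSup_nonneg ?_
  rintro _ ⟨E, -, -, -, rfl⟩
  exact integral_nonneg fun x ↦ Real.rpow_nonneg (adicMax_nonneg N φ x) p

theorem exists_supMeas_le (hN : 1 < N) (hp : 1 < p) (hf : 0 < f) (hκ : 0 ≤ κ) (hfu : f ≤ u)
    (huF : u ^ (p - 1) * f ≤ F) :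
    ∃ φ, Measurable φ ∧ (∀ x ∈ Ico (0 : ℝ) 1, 0 ≤ φ x) ∧ ∫ x in Ico (0 : ℝ) 1, φ x = f ∧
      ∫ x in Ico (0 : ℝ) 1, φ x ^ p = F ∧
      supMeas N p κ φ ≤ κ * u ^ p + sharpConst N p * (F - u ^ (p - 1) * f) := by
  have hu : 0 ≤ u := hf.le.trans hfu
  have hp₀ : 0 ≤ p := by linarith
  obtain ⟨φ, hφ, hmean, hmoment, hsharp⟩ :=
    HasSharpProfile.of_rpow_sub_one_mul_le hN hp hf hfu huF
  have hmax := ((hφ.adicTruncMax (N := N) hu).rpow hp₀).integrable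
  refine ⟨φ, hφ.measurable, fun x _ ↦ hφ.nonneg x, hmean, hmoment, ?_⟩
  calc supMeas N p κ φ
      ≤ κ * u ^ p + ∫ x, (adicTruncMax N u φ x ^ p - u ^ p) ∂unitMeasure :=
        supMeas_le hu hp₀ hκ hmax
    _ = κ * u ^ p + sharpConst N p * (F - u ^ (p - 1) * f) := by
        rw [integral_sub hmax (integrable_const _), hsharp]
        simp

theorem Dp_le (hN : 1 < N) (hp : 1 < p) (hf : 0 < f) (hκ : 0 ≤ κ) (hfu : f ≤ u)
    (huF : u ^ (p - 1) * f ≤ F) :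
    Dp N p F f κ ≤ κ * u ^ p + sharpConst N p * (F - u ^ (p - 1) * f) := by
  obtain ⟨φ, hφm, hφ₀, hmean, hmoment, hle⟩ := exists_supMeas_le hN hp hf hκ hfu huF
  refine le_trans (csInf_le ⟨0, ?_⟩ ⟨φ, hφm, hφ₀, hmean, hmoment, rfl⟩) hle
  rintro _ ⟨ψ, -, -, -, -, rfl⟩
  exact supMeas_nonneg N p κ ψ

lemma rpow_sub_one_mul_le_iff (hp : 1 < p) (hf : 0 < f) (hF : 0 ≤ F) (hu : 0 ≤ u) :
    u ^ (p - 1) * f ≤ F ↔ u ≤ (F / f) ^ (1 / (p - 1)) := by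
  rw [one_div, Real.le_rpow_inv_iff_of_pos hu (div_nonneg hF hf.le) (sub_pos.2 hp),
    le_div_iff₀ hf]

theorem exists_le_supMeas (hN : 1 < N) (hp : 1 < p) (hφm : Measurable φ)
    (hφ₀ : ∀ x ∈ Ico (0 : ℝ) 1, 0 ≤ φ x) (hmean : ∫ x in Ico (0 : ℝ) 1, φ x = f)
    (hmoment : ∫ x in Ico (0 : ℝ) 1, φ x ^ p = F) (hf : 0 < f) (hF : 0 < F) (hfF : f ^ p ≤ F)
    (hκ : κ ∈ Ioc (0 : ℝ) 1) :
    ∃ u ≥ f, κ * u ≤ f ∧ u ^ (p - 1) * f ≤ F ∧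
      κ * u ^ p + sharpConst N p * (F - u ^ (p - 1) * f) ≤ supMeas N p κ φ := by
  have hφ : Integrable φ unitMeasure :=
    not_imp_comm.1 integral_undef (hmean.trans_ne hf.ne')
  have hφp : Integrable (fun x ↦ φ x ^ p) unitMeasure :=
    not_imp_comm.1 integral_undef (hmoment.trans_ne hF.ne')
  obtain ⟨u, hfu, hκu, hlow, hsharp⟩ :=
    exists_sharp_le_supMeas hN hp hφm hφ₀ hφ hφp (hmean ▸ hf) hκ
  rw [hmean] at hfu hκu hsharp
  rw [hmoment] at hsharp
  by_cases huF : u ^ (p - 1) * f ≤ F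
  · exact ⟨u, hfu, hκu, huF, hsharp⟩
  -- The largest admissible value `v` annihilates the second term, and `v ≤ u`.
  set v := (F / f) ^ (1 / (p - 1))
  have hu : 0 ≤ u := hf.le.trans hfu
  have hv : 0 ≤ v := by positivity
  have hvu : v ≤ u := (not_le.1 (mt (rpow_sub_one_mul_le_iff hp hf hF.le hu).2 huF)).le
  have hfv : f ≤ v :=
    (rpow_sub_one_mul_le_iff hp hf hF.le hf.le).1 (by rwa [rpow_sub_one_mul_self hf.le hp])
  have hvF : v ^ (p - 1) * f = F := by
    simp only [v, one_div, Real.rpow_inv_rpow (div_pos hF hf).le (sub_pos.2 hp).ne',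
      div_mul_cancel₀ _ hf.ne']
  refine ⟨v, hfv, (mul_le_mul_of_nonneg_left hvu hκ.1.le).trans hκu, hvF.le, ?_⟩
  rw [hvF, sub_self, mul_zero, add_zero]
  exact (mul_le_mul_of_nonneg_left (Real.rpow_le_rpow hv hvu (by linarith)) hκ.1.le).trans hlow

end Bellman

theorem stmt1 (N : ℕ) (hN : 2 ≤ N) (p f F κ : ℝ) (hp : 1 < p)
    (hf : 0 < f) (hF : 0 < F) (hfF : f ^ p ≤ F) (hκ : κ ∈ Set.Ioc (0:ℝ) 1) :
    Dp N p F f κ =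
      sInf ((fun u : ℝ => κ * u ^ p +
          (((N : ℝ) ^ p - 1) / ((N : ℝ) ^ p - N)) * (F - u ^ (p - 1) * f)) ''
        Set.Icc f (min ((F / f) ^ (1 / (p - 1))) (f / κ))) := by
  have : NeZero N := ⟨by omega⟩
  have hfF' : f ^ (p - 1) * f ≤ F := (rpow_sub_one_mul_self hf.le hp).trans_le hfF
  obtain ⟨φ, hφm, hφ₀, hmean, hmoment, -⟩ := exists_supMeas_le hN hp hf hκ.1.le le_rfl hfF'
  have hadm {u : ℝ} (hfu : f ≤ u) :
      u ≤ min ((F / f) ^ (1 / (p - 1))) (f / κ) ↔ u ^ (p - 1) * f ≤ F ∧ κ * u ≤ f := by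
    rw [le_min_iff, rpow_sub_one_mul_le_iff hp hf hF.le (hf.le.trans hfu), le_div_iff₀' hκ.1]
  have hupper : ∀ u ∈ Icc f (min ((F / f) ^ (1 / (p - 1))) (f / κ)),
      Dp N p F f κ ≤ κ * u ^ p + sharpConst N p * (F - u ^ (p - 1) * f) := fun u hu ↦
    Dp_le hN hp hf hκ.1.le hu.1 ((hadm hu.1).1 hu.2).1
  refine le_antisymm (le_csInf (Nonempty.image _ ⟨f, le_rfl, ?_⟩) (forall_mem_image.2 hupper))
    (le_csInf ⟨_, φ, hφm, hφ₀, hmean, hmoment, rfl⟩ ?_)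
  · exact (hadm le_rfl).2 ⟨hfF', mul_le_of_le_one_left hf.le hκ.2⟩
  · rintro _ ⟨ψ, hψm, hψ₀, hmean, hmoment, rfl⟩
    obtain ⟨u, hfu, hκu, huF, hle⟩ :=
      exists_le_supMeas hN hp hψm hψ₀ hmean hmoment hf hF hfF hκ
    exact (csInf_le ⟨_, forall_mem_image.2 hupper⟩
      (mem_image_of_mem _ ⟨hfu, (hadm hfu).2 ⟨huF, hκu⟩⟩)).trans hle
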